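/- arXiv:1709.03218 — 4 statements merged into one kernel-verified Lean document; each statement's English description precedes it below -/
import Mathlib

section
/- Fix an integer d ≥ 2. For every integer n ≥ 2, the number of loopless generalized chord diagrams satisfies b(n) = a(n,0) − Σ_{k=0}^{d−2} C(d(n−1)−k−1, d−2−k) · a(n−1,k). -/
/-- A generalized linear diagram on points `1,…,N` whose blocks all have size `d`:
a partition of `{1,…,N}` into blocks of size `d`. -/
def IsLinearDiagram (N d : ℕ) (P : Finset (Finset ℕ)) : Prop :=
  (∀ b ∈ P, b.card = d) ∧ (∀ b ∈ P, ∀ x ∈ b, x ∈ Finset.Icc 1 N) ∧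
    ∀ x ∈ Finset.Icc 1 N, ∃! b : Finset ℕ, b ∈ P ∧ x ∈ b

/-- The number of loops of a linear diagram on points `1,…,N`: indices `i` with
`1 ≤ i ≤ N - 1` such that `i` and `i + 1` lie in the same block. -/
noncomputable def linLoops (N : ℕ) (P : Finset (Finset ℕ)) : ℕ :=
  Set.ncard {i : ℕ | 1 ≤ i ∧ i + 1 ≤ N ∧ ∃ b ∈ P, i ∈ b ∧ i + 1 ∈ b}

/-- `numA d n k` : the number of generalized linear diagrams of order `(n,d)`
with exactly `k` loops. -/
noncomputable def numA (d n k : ℕ) : ℕ :=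
  Set.ncard {P : Finset (Finset ℕ) | IsLinearDiagram (n * d) d P ∧ linLoops (n * d) P = k}

/-- `numA` with an integer loop index, zero for negative indices. -/
noncomputable def numAZ (d n : ℕ) (k : ℤ) : ℕ :=
  if 0 ≤ k then numA d n k.toNat else 0

/-- Binomial coefficient with integer arguments: `0` when `y < 0` or `y > x`. -/
def iChoose (x y : ℤ) : ℕ :=
  if 0 ≤ y ∧ y ≤ x then x.toNat.choose y.toNat else 0

/-- A generalized chord diagram on `ZMod N` whose blocks all have size `d`:
a partition of `ZMod N` into blocks of size `d`. -/
def IsChordDiagram (N d : ℕ) (P : Finset (Finset (ZMod N))) : Prop :=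
  (∀ b ∈ P, b.card = d) ∧ ∀ x : ZMod N, ∃! b : Finset (ZMod N), b ∈ P ∧ x ∈ b

/-- A chord diagram is loopless if no residues `i`, `i+1` lie in the same block. -/
def ChordLoopless (N : ℕ) (P : Finset (Finset (ZMod N))) : Prop :=
  ∀ i : ZMod N, ∀ b ∈ P, i ∈ b → i + 1 ∈ b → False

/-- `numB d n` : the number of loopless generalized chord diagrams of order `(n,d)`. -/
noncomputable def numB (d n : ℕ) : ℕ :=
  Set.ncard {P : Finset (Finset (ZMod (n * d))) |
    IsChordDiagram (n * d) d P ∧ ChordLoopless (n * d) P}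

/-- The shift `i ↦ i + v` modulo `M`, on the representatives `1,…,M`. -/
def shiftMod (M v i : ℕ) : ℕ := if i + v ≤ M then i + v else i + v - M

/-- An `m`-symmetric linear diagram with sector size `v` and blocks of size `d`:
a partition of `{1,…,m·v}` into blocks of size `d` invariant under the shift by `v`
modulo `m·v`. -/
def IsMSymLinear (d m v : ℕ) (P : Finset (Finset ℕ)) : Prop :=
  IsLinearDiagram (m * v) d P ∧ ∀ b ∈ P, b.image (shiftMod (m * v) v) ∈ P

/-- The number of loops lying in sector `s` (sectors numbered from `0`):
indices `i` with `s·v + 1 ≤ i ≤ (s+1)·v - 1` such that `i` and `i + 1` lie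
in the same block. -/
noncomputable def sectorLoops (v : ℕ) (P : Finset (Finset ℕ)) (s : ℕ) : ℕ :=
  Set.ncard {i : ℕ | s * v + 1 ≤ i ∧ i + 1 ≤ (s + 1) * v ∧ ∃ b ∈ P, i ∈ b ∧ i + 1 ∈ b}

/-- `numAtil d m v k` : the number of `m`-symmetric linear diagrams with sector size `v`,
blocks of size `d`, and exactly `k` loops in each sector (`ã(v,k;m,d)`). -/
noncomputable def numAtil (d m v k : ℕ) : ℕ :=
  Set.ncard {P : Finset (Finset ℕ) |
    IsMSymLinear d m v P ∧ ∀ s < m, sectorLoops v P s = k}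

/-!
Cut the circle open: a loopless chord diagram is a loopless linear diagram in which the points `1`
and `nd` lie in different blocks. It remains to count the loopless linear diagrams with a block `B`
through both ends. Deleting `B` leaves a diagram `Q` on `d(n-1)` points. The block `B` has no two
consecutive points, so it is determined by the set of the `d` gaps of `Q` it occupies, out of
`d(n-1) + 1`. Looplessness forces `B` to occupy the gap at each loop of `Q`, besides the two
outermost gaps; if `Q` has `k` loops, the other `d - 2 - k` gaps are chosen freely among
`d(n-1) - k - 1`.
-/

namespace ChordDiagram

open Finset

section UniformPartitions

variable {α β : Type*} {X B : Finset α} {d : ℕ} {P : Finset (Finset α)}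

open Classical in
/-- The partitions of `X` into blocks of size `d`, each encoded by its set of blocks. -/
noncomputable def uniformPartitions (X : Finset α) (d : ℕ) : Finset (Finset (Finset α)) :=
  {P ∈ (X.powersetCard d).powerset | ∀ x ∈ X, ∃! b, b ∈ P ∧ x ∈ b}

theorem mem_uniformPartitions :
    P ∈ uniformPartitions X d ↔
      (∀ b ∈ P, #b = d) ∧ (∀ b ∈ P, b ⊆ X) ∧ ∀ x ∈ X, ∃! b, b ∈ P ∧ x ∈ b := by
  simp only [uniformPartitions, mem_filter, mem_powerset, subset_iff (s₁ := P), mem_powersetCard,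
    forall_and]
  tauto

theorem eq_of_mem_of_mem (hP : P ∈ uniformPartitions X d) {b c : Finset α} (hb : b ∈ P)
    (hc : c ∈ P) {x : α} (hxb : x ∈ b) (hxc : x ∈ c) : b = c := by
  obtain ⟨-, hsub, hex⟩ := mem_uniformPartitions.1 hP
  exact (hex x (hsub b hb hxb)).unique ⟨hb, hxb⟩ ⟨hc, hxc⟩

theorem insert_mem_uniformPartitions [DecidableEq α] (hBX : B ⊆ X) (hB : #B = d)
    (hP : P ∈ uniformPartitions (X \ B) d) : insert B P ∈ uniformPartitions X d := by
  obtain ⟨hcard, hsub, hex⟩ := mem_uniformPartitions.1 hP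
  refine mem_uniformPartitions.2 ⟨?_, ?_, fun x hx => ?_⟩
  · simpa [hB] using hcard
  · simpa [hBX] using fun b hb => (hsub b hb).trans sdiff_subset
  · have hxB_of_mem : ∀ c ∈ P, x ∈ c → x ∉ B := fun c hc hxc => (mem_sdiff.1 (hsub c hc hxc)).2
    by_cases hxB : x ∈ B
    · refine ⟨B, ⟨mem_insert_self B P, hxB⟩, fun c ⟨hc, hxc⟩ => ?_⟩
      exact (mem_insert.1 hc).resolve_right fun hcP => hxB_of_mem c hcP hxc hxB
    · obtain ⟨b, ⟨hb, hxb⟩, hunique⟩ := hex x (mem_sdiff.2 ⟨hx, hxB⟩)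
      refine ⟨b, ⟨mem_insert_of_mem hb, hxb⟩, fun c ⟨hc, hxc⟩ => ?_⟩
      rcases mem_insert.1 hc with rfl | hcP
      · exact absurd hxc hxB
      · exact hunique c ⟨hcP, hxc⟩

theorem erase_mem_uniformPartitions [DecidableEq α] (hP : P ∈ uniformPartitions X d)
    (hBP : B ∈ P) : P.erase B ∈ uniformPartitions (X \ B) d := by
  obtain ⟨hcard, hsub, hex⟩ := mem_uniformPartitions.1 hP
  refine mem_uniformPartitions.2 ⟨fun b hb => hcard b (mem_of_mem_erase hb),
    fun b hb x hxb => ?_, fun x hx => ?_⟩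
  · obtain ⟨hne, hbP⟩ := mem_erase.1 hb
    exact mem_sdiff.2 ⟨hsub b hbP hxb, fun hxB => hne (eq_of_mem_of_mem hP hbP hBP hxb hxB)⟩
  · obtain ⟨hxX, hxB⟩ := mem_sdiff.1 hx
    obtain ⟨b, ⟨hb, hxb⟩, hunique⟩ := hex x hxX
    have hne : b ≠ B := fun h => hxB (h ▸ hxb)
    exact ⟨b, ⟨mem_erase.2 ⟨hne, hb⟩, hxb⟩,
      fun c ⟨hc, hxc⟩ => hunique c ⟨mem_of_mem_erase hc, hxc⟩⟩

theorem card_filter_mem_and [DecidableEq α] (hBX : B ⊆ X) (hB : #B = d) (hne : B.Nonempty)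
    (p : Finset (Finset α) → Prop) [DecidablePred p] :
    #{P ∈ uniformPartitions X d | B ∈ P ∧ p P} =
      #{Q ∈ uniformPartitions (X \ B) d | p (insert B Q)} := by
  have hB_notMem : ∀ Q ∈ uniformPartitions (X \ B) d, B ∉ Q := fun Q hQ hBQ => by
    obtain ⟨x, hx⟩ := hne
    exact (mem_sdiff.1 ((mem_uniformPartitions.1 hQ).2.1 B hBQ hx)).2 hx
  refine card_nbij' (fun P => P.erase B) (fun Q => insert B Q)
    (fun P hP => ?_) (fun Q hQ => ?_) (fun P hP => ?_) (fun Q hQ => ?_)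
  · obtain ⟨hP, hBP, hp⟩ := mem_filter.1 hP
    exact mem_filter.2 ⟨erase_mem_uniformPartitions hP hBP, by rwa [insert_erase hBP]⟩
  · obtain ⟨hQ, hp⟩ := mem_filter.1 hQ
    exact mem_filter.2 ⟨insert_mem_uniformPartitions hBX hB hQ, mem_insert_self B Q, hp⟩
  · exact insert_erase (mem_filter.1 hP).2.1
  · exact erase_insert (hB_notMem Q (mem_filter.1 hQ).1)

/-- The family of blocks `P` with its points renamed along `f`. -/
def mapBlocks (f : α ↪ β) : Finset (Finset α) ↪ Finset (Finset β) :=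
  (mapEmbedding (mapEmbedding f).toEmbedding).toEmbedding

theorem mem_mapBlocks {f : α ↪ β} {c : Finset β} :
    c ∈ mapBlocks f P ↔ ∃ b ∈ P, b.map f = c := by
  simp [mapBlocks]

theorem mapBlocks_mem_uniformPartitions_iff {f : α ↪ β} :
    mapBlocks f P ∈ uniformPartitions (X.map f) d ↔ P ∈ uniformPartitions X d := by
  have hblock : ∀ x, (∃! c, c ∈ mapBlocks f P ∧ f x ∈ c) ↔ ∃! b, b ∈ P ∧ x ∈ b := fun x =>
    ⟨fun ⟨c, ⟨hc, hxc⟩, hunique⟩ => by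
      obtain ⟨b, hb, rfl⟩ := mem_mapBlocks.1 hc
      exact ⟨b, ⟨hb, (mem_map' f).1 hxc⟩, fun b' ⟨hb', hxb'⟩ =>
        map_injective f (hunique _ ⟨mem_mapBlocks.2 ⟨b', hb', rfl⟩, (mem_map' f).2 hxb'⟩)⟩,
    fun ⟨b, ⟨hb, hxb⟩, hunique⟩ => by
      refine ⟨b.map f, ⟨mem_mapBlocks.2 ⟨b, hb, rfl⟩, (mem_map' f).2 hxb⟩, ?_⟩
      rintro _ ⟨hc, hxc⟩
      obtain ⟨b', hb', rfl⟩ := mem_mapBlocks.1 hc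
      rw [hunique b' ⟨hb', (mem_map' f).1 hxc⟩]⟩
  simp only [mem_uniformPartitions, forall_mem_map, hblock]
  simp [mem_mapBlocks]

theorem uniformPartitions_map (f : α ↪ β) :
    uniformPartitions (X.map f) d = (uniformPartitions X d).map (mapBlocks f) := by
  ext P'
  refine ⟨fun hP' => ?_, fun hP' => ?_⟩
  · have hblocks : P' ⊆ X.powerset.map (mapEmbedding f).toEmbedding := fun c hc => by
      obtain ⟨b, hbX, rfl⟩ := subset_map_iff.1 ((mem_uniformPartitions.1 hP').2.1 c hc)
      exact mem_map_of_mem _ (mem_powerset.2 hbX)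
    obtain ⟨P, -, rfl⟩ := subset_map_iff.1 hblocks
    exact mem_map_of_mem (mapBlocks f) (mapBlocks_mem_uniformPartitions_iff.1 hP')
  · obtain ⟨P, hP, rfl⟩ := mem_map.1 hP'
    exact mapBlocks_mem_uniformPartitions_iff.2 hP

theorem card_filter_uniformPartitions_map (f : α ↪ β) (p : Finset (Finset β) → Prop)
    [DecidablePred p] :
    #{P ∈ uniformPartitions (X.map f) d | p P} =
      #{P ∈ uniformPartitions X d | p (mapBlocks f P)} := by
  rw [uniformPartitions_map, filter_map, card_map]
  rfl

/-- Two points are in the same block of the family `P`. -/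
def SameBlock (P : Finset (Finset α)) (x y : α) : Prop := ∃ b ∈ P, x ∈ b ∧ y ∈ b

instance [DecidableEq α] (x y : α) : Decidable (SameBlock P x y) :=
  inferInstanceAs (Decidable (∃ b ∈ P, x ∈ b ∧ y ∈ b))

theorem sameBlock_comm {x y : α} : SameBlock P x y ↔ SameBlock P y x := by
  simp only [SameBlock, and_comm]

theorem sameBlock_mapBlocks_iff {f : α ↪ β} {u v : β} :
    SameBlock (mapBlocks f P) u v ↔ ∃ x y, f x = u ∧ f y = v ∧ SameBlock P x y := by
  simp only [SameBlock, mem_mapBlocks]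
  constructor
  · rintro ⟨_, ⟨b, hb, rfl⟩, hu, hv⟩
    obtain ⟨x, hx, rfl⟩ := mem_map.1 hu
    obtain ⟨y, hy, rfl⟩ := mem_map.1 hv
    exact ⟨x, y, rfl, rfl, b, hb, hx, hy⟩
  · rintro ⟨x, y, rfl, rfl, b, hb, hx, hy⟩
    exact ⟨b.map f, ⟨b, hb, rfl⟩, mem_map_of_mem f hx, mem_map_of_mem f hy⟩

end UniformPartitions

section Loops

variable {N d : ℕ} {P : Finset (Finset ℕ)}

/-- The set of loops of a family of blocks `P`: the `i` such that `i` and `i + 1` lie in the same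
block. No bound on `i` is imposed; in a diagram on `1, …, N` it is automatic. -/
def loops (P : Finset (Finset ℕ)) : Finset ℕ := P.biUnion fun b => {i ∈ b | i + 1 ∈ b}

theorem mem_loops {i : ℕ} : i ∈ loops P ↔ SameBlock P i (i + 1) := by
  simp [loops, SameBlock]

theorem loops_subset_Ico (hP : P ∈ uniformPartitions (Icc 1 N) d) : loops P ⊆ Ico 1 N := by
  intro i hi
  obtain ⟨b, hb, hib, hib'⟩ := mem_loops.1 hi
  have hsub := (mem_uniformPartitions.1 hP).2.1 b hb
  exact mem_Ico.2 ⟨(mem_Icc.1 (hsub hib)).1, (mem_Icc.1 (hsub hib')).2⟩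

theorem isLinearDiagram_iff : IsLinearDiagram N d P ↔ P ∈ uniformPartitions (Icc 1 N) d :=
  mem_uniformPartitions.symm

theorem linLoops_eq_card_loops (hP : P ∈ uniformPartitions (Icc 1 N) d) :
    linLoops N P = #(loops P) := by
  rw [linLoops, ← Set.ncard_coe_finset]
  congr 1
  ext i
  refine ⟨fun ⟨_, _, hi⟩ => mem_loops.2 hi, fun hi => ?_⟩
  have hiN := mem_Ico.1 (loops_subset_Ico hP hi)
  exact ⟨hiN.1, hiN.2, mem_loops.1 hi⟩

theorem numA_eq_card (d n k : ℕ) :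
    numA d n k = #{P ∈ uniformPartitions (Icc 1 (n * d)) d | #(loops P) = k} := by
  rw [numA, ← Set.ncard_coe_finset]
  congr 1
  ext P
  simp only [isLinearDiagram_iff, coe_filter, Set.mem_ofPred_eq]
  exact and_congr_right fun hP => by rw [linLoops_eq_card_loops hP]

end Loops

section ChordDiagrams

variable {N d : ℕ} [NeZero N]

/-- The numbering of `ZMod N` by `1, …, N`, cutting the circle open between `-1` and `0`. -/
def cut (N : ℕ) [NeZero N] : ZMod N ↪ ℕ where
  toFun x := x.val + 1
  inj' _ _ h := ZMod.val_injective N (Nat.succ_injective h)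

theorem cut_apply (x : ZMod N) : cut N x = x.val + 1 := rfl

theorem map_cut_univ : (univ : Finset (ZMod N)).map (cut N) = Icc 1 N := by
  refine eq_of_subset_of_card_le (fun i hi => ?_) (by simp [ZMod.card])
  obtain ⟨x, -, rfl⟩ := mem_map.1 hi
  exact mem_Icc.2 ⟨Nat.le_add_left 1 _, ZMod.val_lt x⟩

theorem eq_add_one_iff_cut {x y : ZMod N} :
    y = x + 1 ↔ cut N y = cut N x + 1 ∨ cut N x = N ∧ cut N y = 1 := by
  have hx := ZMod.val_lt x
  have hy := ZMod.val_lt y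
  rw [← (ZMod.val_injective N).eq_iff, ZMod.val_add, ZMod.val_one_eq_one_mod, Nat.add_mod_mod,
    cut_apply, cut_apply]
  rcases Nat.lt_or_eq_of_le (Nat.succ_le_of_lt hx) with hlt | heq
  · rw [Nat.mod_eq_of_lt hlt]
    lia
  · rw [Nat.succ_eq_add_one] at heq
    rw [heq, Nat.mod_self]
    lia

theorem chordLoopless_iff {P : Finset (Finset (ZMod N))} :
    ChordLoopless N P ↔
      loops (mapBlocks (cut N) P) = ∅ ∧ ¬ SameBlock (mapBlocks (cut N) P) 1 N := by
  have hloopless : ChordLoopless N P ↔ ∀ x y, y = x + 1 → ¬ SameBlock P x y :=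
    ⟨fun h x y hxy ⟨b, hb, hx, hy⟩ => h x b hb hx (hxy ▸ hy),
      fun h x b hb hx hy => h x (x + 1) rfl ⟨b, hb, hx, hy⟩⟩
  simp only [hloopless, eq_empty_iff_forall_notMem, mem_loops, sameBlock_comm (x := 1),
    sameBlock_mapBlocks_iff, eq_add_one_iff_cut]
  grind

theorem numB_eq_card (d n : ℕ) (h : n * d ≠ 0) :
    numB d n = #{P ∈ uniformPartitions (Icc 1 (n * d)) d |
      loops P = ∅ ∧ ¬ SameBlock P 1 (n * d)} := by
  have : NeZero (n * d) := ⟨h⟩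
  rw [← map_cut_univ, card_filter_uniformPartitions_map, numB, ← Set.ncard_coe_finset]
  congr 1
  ext P
  simp [IsChordDiagram, mem_uniformPartitions, chordLoopless_iff]

end ChordDiagrams

section Spaced

variable {B S : Finset ℕ} {n d : ℕ}

/-- A set of natural numbers without two consecutive elements. -/
def Spaced (B : Finset ℕ) : Prop := ∀ b ∈ B, b + 1 ∉ B

instance : Decidable (Spaced B) := inferInstanceAs (Decidable (∀ b ∈ B, b + 1 ∉ B))

/-- The gaps between consecutive points outside `B` that are occupied by `B`: the gap of `b ∈ B` is
numbered by how many points outside `B` precede `b`. As `0` counts as such a point, a set of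
positive numbers occupies gap `g` when it has an element just before the `g`-th positive point
outside it. -/
def gaps (B : Finset ℕ) : Finset ℕ := B.image (Nat.count (· ∉ B))

/-- The set that occupies each of the gaps in `S` with one element; an inverse of `gaps` on spaced
sets. -/
def fillGaps (S : Finset ℕ) : Finset ℕ := S.image fun s => s + Nat.count (· ∈ S) s

theorem count_mem_add_count_notMem (B : Finset ℕ) (n : ℕ) :
    Nat.count (· ∈ B) n + Nat.count (· ∉ B) n = n := by
  simp only [Nat.count_eq_card_filter_range, card_filter_add_card_filter_not, card_range]

theorem count_mem_eq_card (h : B ⊆ range n) : Nat.count (· ∈ B) n = #B := by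
  rw [Nat.count_eq_card_filter_range, filter_mem_eq_inter, inter_eq_right.2 h]

theorem count_mem_image {f : ℕ → ℕ} (hf : StrictMonoOn f S) {s : ℕ} (hs : s ∈ S) :
    Nat.count (· ∈ S.image f) (f s) = Nat.count (· ∈ S) s := by
  have hfilter : {x ∈ range (f s) | x ∈ S.image f} = {t ∈ range s | t ∈ S}.image f := by
    ext x
    simp only [mem_filter, mem_range, mem_image]
    constructor
    · rintro ⟨hlt, t, ht, rfl⟩
      exact ⟨t, ⟨(hf.lt_iff_lt ht hs).1 hlt, ht⟩, rfl⟩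
    · rintro ⟨t, ⟨hlt, ht⟩, rfl⟩
      exact ⟨hf ht hs hlt, t, ht, rfl⟩
  have hinj : Set.InjOn f ({t ∈ range s | t ∈ S} : Finset ℕ) :=
    hf.injOn.mono fun t ht => (mem_filter.1 ht).2
  rw [Nat.count_eq_card_filter_range, Nat.count_eq_card_filter_range, hfilter,
    card_image_of_injOn hinj]

theorem Spaced.strictMonoOn_count_notMem (hB : Spaced B) :
    StrictMonoOn (Nat.count (· ∉ B)) B := by
  intro b hb c hc hbc
  have hne : b + 1 ≠ c := fun h => hB b hb (h ▸ hc)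
  exact (Nat.count_monotone _ b.le_succ).trans_lt (Nat.count_strict_mono (hB b hb) (by lia))

theorem strictMono_add_count_mem (S : Finset ℕ) : StrictMono fun s => s + Nat.count (· ∈ S) s :=
  strictMono_id.add_monotone (Nat.count_monotone _)

theorem card_gaps (hB : Spaced B) : #(gaps B) = #B :=
  card_image_of_injOn hB.strictMonoOn_count_notMem.injOn

theorem card_fillGaps (S : Finset ℕ) : #(fillGaps S) = #S :=
  card_image_of_injective S (strictMono_add_count_mem S).injective

theorem spaced_fillGaps (S : Finset ℕ) : Spaced (fillGaps S) := by
  simp only [Spaced, fillGaps, mem_image, not_exists, not_and, forall_exists_index, and_imp]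
  rintro _ s hs rfl t - hst
  have hlt : s < t := (strictMono_add_count_mem S).lt_iff_lt.1 (by lia)
  have := Nat.count_strict_mono (p := (· ∈ S)) hs hlt
  lia

theorem fillGaps_gaps (hB : Spaced B) : fillGaps (gaps B) = B := by
  rw [fillGaps, gaps, image_image]
  conv_rhs => rw [← image_id (s := B)]
  refine image_congr fun b hb => ?_
  rw [Function.comp_apply, count_mem_image hB.strictMonoOn_count_notMem hb, add_comm,
    count_mem_add_count_notMem, id]

theorem gaps_fillGaps (S : Finset ℕ) : gaps (fillGaps S) = S := by
  have hcomp : gaps (fillGaps S) =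
      S.image (Nat.count (· ∉ fillGaps S) ∘ fun s => s + Nat.count (· ∈ S) s) := image_image
  rw [hcomp]
  conv_rhs => rw [← image_id (s := S)]
  refine image_congr fun s hs => ?_
  have hcount : Nat.count (· ∈ fillGaps S) (s + Nat.count (· ∈ S) s) = Nat.count (· ∈ S) s :=
    count_mem_image ((strictMono_add_count_mem S).strictMonoOn _) hs
  have hsum := count_mem_add_count_notMem (fillGaps S) (s + Nat.count (· ∈ S) s)
  simp only [Function.comp_apply, id]
  lia

/-- The possible blocks of size `d` through both ends of a loopless diagram on `1, …, N`. -/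
def spacedBlocks (N d : ℕ) : Finset (Finset ℕ) :=
  {B ∈ (Icc 1 N).powersetCard d | Spaced B ∧ 1 ∈ B ∧ N ∈ B}

theorem count_mem_add_one_eq_card (hS : S ⊆ Icc 1 n) (hn : n ∈ S) :
    Nat.count (· ∈ S) n + 1 = #S := by
  rw [← Nat.count_succ_eq_succ_count_iff.2 hn, count_mem_eq_card]
  exact fun s hs => mem_range.2 (Nat.lt_succ_of_le (mem_Icc.1 (hS hs)).2)

theorem gaps_mem_of_mem_spacedBlocks {M : ℕ} (hB : B ∈ spacedBlocks (M + d) d) :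
    gaps B ∈ (Icc 1 (M + 1)).powersetCard d ∧ {1, M + 1} ⊆ gaps B := by
  simp only [spacedBlocks, mem_filter, mem_powersetCard] at hB
  obtain ⟨⟨hsub, hcard⟩, hspaced, h1, hlast⟩ := hB
  have h0 : 0 ∉ B := fun h => by simpa using hsub h
  have hcount_one : Nat.count (· ∉ B) 1 = 1 := by simp [Nat.count_succ, h0]
  have hcount_last : Nat.count (· ∉ B) (M + d) = M + 1 := by
    have := count_mem_add_count_notMem B (M + d)
    have := count_mem_add_one_eq_card hsub hlast
    lia
  refine ⟨mem_powersetCard.2 ⟨fun g hg => ?_, (card_gaps hspaced).trans hcard⟩, ?_⟩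
  · obtain ⟨b, hb, rfl⟩ := mem_image.1 hg
    obtain ⟨h1b, hbN⟩ := mem_Icc.1 (hsub hb)
    rw [mem_Icc, ← hcount_last]
    nth_rw 1 [← hcount_one]
    exact ⟨Nat.count_monotone _ h1b, Nat.count_monotone _ hbN⟩
  · rw [insert_subset_iff, singleton_subset_iff]
    exact ⟨mem_image.2 ⟨1, h1, hcount_one⟩, mem_image.2 ⟨M + d, hlast, hcount_last⟩⟩

theorem fillGaps_mem_spacedBlocks {M : ℕ} (hS : S ∈ (Icc 1 (M + 1)).powersetCard d)
    (hends : {1, M + 1} ⊆ S) : fillGaps S ∈ spacedBlocks (M + d) d := by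
  obtain ⟨hsub, hcard⟩ := mem_powersetCard.1 hS
  rw [insert_subset_iff, singleton_subset_iff] at hends
  have h0 : 0 ∉ S := fun h => by simpa using hsub h
  have hfill_one : 1 + Nat.count (· ∈ S) 1 = 1 := by simp [Nat.count_succ, h0]
  have hfill_last : M + 1 + Nat.count (· ∈ S) (M + 1) = M + d := by
    have := count_mem_add_one_eq_card hsub hends.2
    lia
  simp only [spacedBlocks, mem_filter, mem_powersetCard]
  refine ⟨⟨fun b hb => ?_, (card_fillGaps S).trans hcard⟩, spaced_fillGaps S,
    mem_image.2 ⟨1, hends.1, hfill_one⟩, mem_image.2 ⟨M + 1, hends.2, hfill_last⟩⟩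
  obtain ⟨s, hs, rfl⟩ := mem_image.1 hb
  obtain ⟨h1s, hsM⟩ := mem_Icc.1 (hsub hs)
  exact mem_Icc.2 ⟨h1s.trans (Nat.le_add_right _ _),
    hfill_last ▸ (strictMono_add_count_mem S).monotone hsM⟩

theorem card_filter_subset_gaps {M : ℕ} (K : Finset ℕ) :
    #{B ∈ spacedBlocks (M + d) d | K ⊆ gaps B} =
      #{S ∈ (Icc 1 (M + 1)).powersetCard d | {1, M + 1} ∪ K ⊆ S} := by
  refine card_nbij' gaps fillGaps (fun B hB => ?_) (fun S hS => ?_) (fun B hB => ?_)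
    (fun S _ => gaps_fillGaps S)
  · obtain ⟨hB, hK⟩ := mem_filter.1 hB
    obtain ⟨hgaps, hends⟩ := gaps_mem_of_mem_spacedBlocks hB
    exact mem_filter.2 ⟨hgaps, union_subset hends hK⟩
  · obtain ⟨hS, hK⟩ := mem_filter.1 hS
    obtain ⟨hends, hK⟩ := union_subset_iff.1 hK
    exact mem_filter.2 ⟨fillGaps_mem_spacedBlocks hS hends, by rwa [gaps_fillGaps]⟩
  · exact fillGaps_gaps (mem_filter.1 (mem_filter.1 hB).1).2.1

end Spaced

section Outside

variable {B : Finset ℕ} {M d : ℕ}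

/-- The increasing enumeration, from index `0`, of the points outside `B`; it fixes `0` when
`0 ∉ B`, so that the positive points outside `B` are numbered `1, 2, …`. -/
noncomputable def outside (B : Finset ℕ) : ℕ ↪o ℕ :=
  OrderEmbedding.ofStrictMono (Nat.nth (· ∉ B)) (Nat.nth_strictMono B.finite_toSet.infinite_compl)

theorem outside_notMem (B : Finset ℕ) (j : ℕ) : outside B j ∉ B :=
  Nat.nth_mem_of_infinite B.finite_toSet.infinite_compl j

theorem count_outside (B : Finset ℕ) (j : ℕ) : Nat.count (· ∉ B) (outside B j) = j :=
  Nat.count_nth_of_infinite B.finite_toSet.infinite_compl j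

theorem map_outside_Icc (hB : B ⊆ Icc 1 (M + d)) (hcard : #B = d) :
    (Icc 1 M).map (outside B).toEmbedding = Icc 1 (M + d) \ B := by
  have hcount : Nat.count (· ∉ B) (M + d + 1) = M + 1 := by
    have := count_mem_add_count_notMem B (M + d + 1)
    have := count_mem_eq_card (n := M + d + 1) fun b hb =>
      mem_range.2 (Nat.lt_succ_of_le (mem_Icc.1 (hB hb)).2)
    lia
  refine eq_of_subset_of_card_le (fun x hx => ?_) ?_
  · obtain ⟨j, hj, rfl⟩ := mem_map.1 hx
    obtain ⟨h1j, hjM⟩ := mem_Icc.1 hj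
    have hlt : outside B j < M + d + 1 := Nat.nth_lt_of_lt_count (by lia)
    exact mem_sdiff.2 ⟨mem_Icc.2 ⟨h1j.trans (outside B).strictMono.le_apply,
      Nat.le_of_lt_succ hlt⟩, outside_notMem B j⟩
  · simp [card_sdiff_of_subset hB, hcard]

theorem succ_mem_gaps_iff {j : ℕ} : j + 1 ∈ gaps B ↔ outside B (j + 1) ≠ outside B j + 1 := by
  have hcount : Nat.count (· ∉ B) (outside B j + 1) = j + 1 := by
    rw [Nat.count_succ_eq_succ_count_iff.2 (outside_notMem B j), count_outside]
  constructor
  · intro hj heq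
    obtain ⟨b, hb, hbj⟩ := mem_image.1 hj
    have hgt : outside B j < b := Nat.nth_lt_of_lt_count (by lia)
    have hle : b ≤ outside B (j + 1) :=
      hbj ▸ Nat.le_nth_count B.finite_toSet.infinite_compl b
    have hbeq : b = outside B (j + 1) := by lia
    exact outside_notMem B (j + 1) (hbeq ▸ hb)
  · intro hne
    by_contra hj
    have hnotMem : outside B j + 1 ∉ B := fun h => hj (mem_image.2 ⟨_, h, hcount⟩)
    exact hne (hcount ▸ Nat.nth_count (p := (· ∉ B)) hnotMem)

theorem loops_mapBlocks_eq_empty_iff {f : ℕ ↪o ℕ} {Q : Finset (Finset ℕ)} :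
    loops (mapBlocks f.toEmbedding Q) = ∅ ↔ ∀ j ∈ loops Q, f (j + 1) ≠ f j + 1 := by
  have hsucc : ∀ x y, f y = f x + 1 → y = x + 1 := fun x y hxy => by
    have hlt : x < y := f.lt_iff_lt.1 (by lia)
    have hlt' : f x < f (x + 1) := f.lt_iff_lt.2 x.lt_succ_self
    have hle : f (x + 1) ≤ f y := f.le_iff_le.2 hlt
    exact f.injective (by lia)
  simp only [eq_empty_iff_forall_notMem, mem_loops, sameBlock_mapBlocks_iff]
  constructor
  · intro h j hj heq
    exact h (f j) ⟨j, j + 1, rfl, heq, hj⟩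
  · rintro h _ ⟨x, y, rfl, hy, hxy⟩
    obtain rfl := hsucc x y hy
    exact h x hxy hy

theorem loops_insert_mapBlocks_outside_eq_empty_iff {Q : Finset (Finset ℕ)} :
    loops (insert B (mapBlocks (outside B).toEmbedding Q)) = ∅ ↔
      Spaced B ∧ (loops Q).map (addRightEmbedding 1) ⊆ gaps B := by
  have hspaced : ({i ∈ B | i + 1 ∈ B} : Finset ℕ) = ∅ ↔ Spaced B := filter_eq_empty_iff
  have hunion : loops (insert B (mapBlocks (outside B).toEmbedding Q)) =
      {i ∈ B | i + 1 ∈ B} ∪ loops (mapBlocks (outside B).toEmbedding Q) := biUnion_insert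
  rw [hunion, union_eq_empty, hspaced, loops_mapBlocks_eq_empty_iff]
  simp [subset_iff, succ_mem_gaps_iff]

end Outside

section Counting

variable {M d : ℕ}

theorem card_filter_mem_and_loops_eq_empty {B : Finset ℕ} (hB : B ∈ spacedBlocks (M + d) d) :
    #{P ∈ uniformPartitions (Icc 1 (M + d)) d | B ∈ P ∧ loops P = ∅} =
      #{Q ∈ uniformPartitions (Icc 1 M) d | (loops Q).map (addRightEmbedding 1) ⊆ gaps B} := by
  simp only [spacedBlocks, mem_filter, mem_powersetCard] at hB
  obtain ⟨⟨hsub, hcard⟩, hspaced, h1, -⟩ := hB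
  rw [card_filter_mem_and hsub hcard ⟨1, h1⟩, ← map_outside_Icc hsub hcard,
    card_filter_uniformPartitions_map]
  simp only [loops_insert_mapBlocks_outside_eq_empty_iff, hspaced, true_and]

theorem card_filter_map_subset_gaps {L : Finset ℕ} (hM : 0 < M) (hL : L ⊆ Ico 1 M) :
    #{B ∈ spacedBlocks (M + d) d | L.map (addRightEmbedding 1) ⊆ gaps B} =
      if #L ∈ range (d - 1) then (M - #L - 1).choose (d - 2 - #L) else 0 := by
  have hcard : #({1, M + 1} ∪ L.map (addRightEmbedding 1)) = #L + 2 := by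
    rw [card_union_of_disjoint, card_map, card_pair (by lia), add_comm]
    rw [disjoint_left]
    intro i hi hi'
    obtain ⟨j, hj, rfl⟩ := mem_map.1 hi'
    have := mem_Ico.1 (hL hj)
    simp only [mem_insert, mem_singleton, addRightEmbedding_apply] at hi
    lia
  have hsub : {1, M + 1} ∪ L.map (addRightEmbedding 1) ⊆ Icc 1 (M + 1) := by
    intro i hi
    simp only [mem_union, mem_insert, mem_singleton, mem_map, addRightEmbedding_apply] at hi
    rcases hi with (rfl | rfl) | ⟨j, hj, rfl⟩
    · simp
    · simp
    · have := mem_Ico.1 (hL hj)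
      exact mem_Icc.2 (by lia)
  rw [card_filter_subset_gaps]
  split_ifs with h <;> rw [mem_range] at h
  · rw [card_filter_powersetCard_subset _ _ _ hsub (by lia), hcard, Nat.card_Icc]
    congr 1 <;> lia
  · rw [card_eq_zero, filter_eq_empty_iff]
    intro S hS hK
    have := card_le_card hK
    have := (mem_powersetCard.1 hS).2
    lia

theorem card_filter_spacedBlocks_mem {N : ℕ} {P : Finset (Finset ℕ)}
    (hP : P ∈ uniformPartitions (Icc 1 N) d) (hloops : loops P = ∅) :
    #{B ∈ spacedBlocks N d | B ∈ P} = if SameBlock P 1 N then 1 else 0 := by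
  obtain ⟨hcard, hsub, -⟩ := mem_uniformPartitions.1 hP
  have hspaced : ∀ B ∈ P, Spaced B := fun B hB b hb hb' =>
    notMem_empty b (hloops ▸ mem_loops.2 ⟨B, hB, hb, hb'⟩)
  have hmem : ∀ B, B ∈ spacedBlocks N d ∧ B ∈ P ↔ B ∈ P ∧ 1 ∈ B ∧ N ∈ B := fun B => by
    simp only [spacedBlocks, mem_filter, mem_powersetCard]
    exact ⟨fun ⟨⟨_, _, hends⟩, hB⟩ => ⟨hB, hends⟩,
      fun ⟨hB, hends⟩ => ⟨⟨⟨hsub B hB, hcard B hB⟩, hspaced B hB, hends⟩, hB⟩⟩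
  split_ifs with hends
  · obtain ⟨B, hB, h1, hlast⟩ := hends
    refine card_eq_one.2 ⟨B, ext fun C => ?_⟩
    rw [mem_filter, hmem, mem_singleton]
    exact ⟨fun ⟨hC, h1C, _⟩ => eq_of_mem_of_mem hP hC hB h1C h1,
      fun h => h ▸ ⟨hB, h1, hlast⟩⟩
  · exact card_eq_zero.2 (filter_eq_empty_iff.2 fun B hB hBP =>
      hends ⟨B, (hmem B).1 ⟨hB, hBP⟩⟩)

theorem card_loopless_sameBlock_ends (hM : 0 < M) :
    #{P ∈ uniformPartitions (Icc 1 (M + d)) d | loops P = ∅ ∧ SameBlock P 1 (M + d)} =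
      ∑ k ∈ range (d - 1), (M - k - 1).choose (d - 2 - k) *
        #{Q ∈ uniformPartitions (Icc 1 M) d | #(loops Q) = k} := by
  calc #{P ∈ uniformPartitions (Icc 1 (M + d)) d | loops P = ∅ ∧ SameBlock P 1 (M + d)}
      = ∑ P ∈ uniformPartitions (Icc 1 (M + d)) d with loops P = ∅,
          #{B ∈ spacedBlocks (M + d) d | B ∈ P} := by
        rw [← filter_filter, card_filter]
        refine sum_congr rfl fun P hP => ?_
        obtain ⟨hP, hloops⟩ := mem_filter.1 hP
        rw [card_filter_spacedBlocks_mem hP hloops]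
    _ = ∑ B ∈ spacedBlocks (M + d) d,
          #{P ∈ uniformPartitions (Icc 1 (M + d)) d | B ∈ P ∧ loops P = ∅} := by
        simp only [and_comm (a := _ ∈ _), ← filter_filter]
        exact sum_card_bipartiteAbove_eq_sum_card_bipartiteBelow fun P B => B ∈ P
    _ = ∑ B ∈ spacedBlocks (M + d) d,
          #{Q ∈ uniformPartitions (Icc 1 M) d | (loops Q).map (addRightEmbedding 1) ⊆ gaps B} :=
        sum_congr rfl fun B hB => card_filter_mem_and_loops_eq_empty hB
    _ = ∑ Q ∈ uniformPartitions (Icc 1 M) d,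
          #{B ∈ spacedBlocks (M + d) d | (loops Q).map (addRightEmbedding 1) ⊆ gaps B} :=
        sum_card_bipartiteAbove_eq_sum_card_bipartiteBelow
          fun B Q => (loops Q).map (addRightEmbedding 1) ⊆ gaps B
    _ = ∑ Q ∈ uniformPartitions (Icc 1 M) d, ∑ k ∈ range (d - 1),
          if #(loops Q) = k then (M - k - 1).choose (d - 2 - k) else 0 := by
        refine sum_congr rfl fun Q hQ => ?_
        rw [card_filter_map_subset_gaps hM (loops_subset_Ico hQ), sum_ite_eq]
    _ = ∑ k ∈ range (d - 1), (M - k - 1).choose (d - 2 - k) *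
          #{Q ∈ uniformPartitions (Icc 1 M) d | #(loops Q) = k} := by
        rw [sum_comm]
        simp only [card_filter, mul_sum, mul_ite, mul_one, mul_zero]

theorem numA_zero_eq_numB_add (d n : ℕ) (h : n * d ≠ 0) :
    numA d n 0 = numB d n + #{P ∈ uniformPartitions (Icc 1 (n * d)) d |
      loops P = ∅ ∧ SameBlock P 1 (n * d)} := by
  rw [numA_eq_card, numB_eq_card d n h]
  simp only [card_eq_zero, ← filter_filter (loops · = ∅)]
  rw [add_comm, card_filter_add_card_filter_not]

end Counting

end ChordDiagram

/-- for `d ≥ 2` and `n ≥ 2`,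
`b(n) = a(n,0) − Σ_{k=0}^{d−2} C(d(n−1)−k−1, d−2−k) · a(n−1,k)`. -/
theorem chord_eq_linear_sub (d : ℕ) (hd : 2 ≤ d) (n : ℕ) (hn : 2 ≤ n) :
    (numB d n : ℤ) =
      (numA d n 0 : ℤ) -
        ∑ k ∈ Finset.range (d - 1),
          ((d * (n - 1) - k - 1).choose (d - 2 - k) * numA d (n - 1) k : ℤ) := by
  obtain ⟨m, rfl⟩ := Nat.exists_eq_add_of_le' (Nat.one_le_of_lt hn)
  have hm : 0 < m * d := Nat.mul_pos (Nat.lt_of_succ_lt_succ hn) (Nat.zero_lt_of_lt hd)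
  have hsplit := ChordDiagram.numA_zero_eq_numB_add d (m + 1) (by lia)
  rw [Nat.succ_mul, ChordDiagram.card_loopless_sameBlock_ends hm] at hsplit
  simp only [← ChordDiagram.numA_eq_card] at hsplit
  rw [Nat.add_sub_cancel, mul_comm d m, hsplit]
  push_cast
  ring
end

section
/- Fix an integer d ≥ 2. For every integer n ≥ 1 and every k with 0 ≤ k ≤ n(d−1), a(n,k) = Σ_{t=k−d+1}^{k+d−1} c(n,k,t) · a(n−1,t), where c(n,k,t) = Σ_{i=0}^{d−1} C(d−1, i) · C(t, t+i−k) · C(d(n−1)−t, d−2i−t+k−1). -/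
/-!
Delete the block `B` containing the first point of a diagram on `M + d` points and close the gaps.
What is left is a diagram `P` on `M` points, and `B` is recorded by the numbers `f g` of its points
lying directly after the point `g` of `P`, where `f 0 ≠ 0` because `B` contains the first point.
The points of `B` form one run for each gap in `S = supp f`, so `B` contributes `d - #S` loops,
while the loops of `P` that `B` destroys are exactly those at the gaps in `S`.
Hence `k = d - #S + #(L \ S)` with `L` the loop set of `P`. Each `S` comes from `C(d - 1, #S - 1)`
compositions `f` of `d`. If `#S = d - i`, then `#(L \ S) = k - i`, so that `t + i - k` of the `t`
elements of `L`, and `d - 2i - t + k - 1` of the `M - t` remaining nonzero gaps, lie in `S`.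
-/

open Finset

section Counting

variable {α : Type*}

theorem card_support_le_degree (f : α →₀ ℕ) : #f.support ≤ f.degree := by
  rw [Finsupp.degree_apply, card_eq_sum_ones]
  exact sum_le_sum fun a ha => Nat.one_le_iff_ne_zero.2 (Finsupp.mem_support_iff.1 ha)

theorem mem_finsuppAntidiag_iff_degree [DecidableEq α] {s : Finset α} {n : ℕ} {f : α →₀ ℕ} :
    f ∈ s.finsuppAntidiag n ↔ f.degree = n ∧ f.support ⊆ s :=
  mem_finsuppAntidiag'

theorem filter_support_eq_map_finsuppAntidiag [DecidableEq α] {s T : Finset α} (hTs : T ⊆ s)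
    (n : ℕ) :
    {f ∈ s.finsuppAntidiag (n + #T) | f.support = T} =
      (T.finsuppAntidiag n).map (addRightEmbedding (Finsupp.indicator T fun _ _ => 1)) := by
  set e : α →₀ ℕ := Finsupp.indicator T fun _ _ => 1
  have he (a : α) : e a = if a ∈ T then 1 else 0 := by simp [e, Finsupp.indicator_apply]
  have hsupp : e.support = T := by ext a; simp [he]
  have hdeg : e.degree = #T := by
    rw [Finsupp.degree_apply, hsupp, card_eq_sum_ones]
    exact sum_congr rfl fun a ha => by simp [he, ha]
  ext f
  simp only [mem_filter, mem_map, mem_finsuppAntidiag_iff_degree, addRightEmbedding_apply]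
  constructor
  · rintro ⟨⟨hf, -⟩, hfT⟩
    have hle : e ≤ f := fun a => by
      have : f a ≠ 0 ↔ a ∈ T := by rw [← hfT, Finsupp.mem_support_iff]
      grind
    obtain ⟨g, rfl⟩ := le_iff_exists_add'.1 hle
    rw [map_add, hdeg, add_left_inj] at hf
    exact ⟨g, ⟨hf, hfT ▸ Finsupp.support_mono le_self_add⟩, rfl⟩
  · rintro ⟨g, ⟨rfl, hg⟩, rfl⟩
    have hgT : (g + e).support = T := by
      rw [Finsupp.support_add_eq_union, hsupp, union_eq_right.2 hg]
    exact ⟨⟨by rw [map_add, hdeg], hgT ▸ hTs⟩, hgT⟩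

theorem card_filter_support_eq [DecidableEq α] {s T : Finset α} (hTs : T ⊆ s) (hT : T.Nonempty)
    {n : ℕ} (hn : 0 < n) :
    #{f ∈ s.finsuppAntidiag n | f.support = T} = (n - 1).choose (#T - 1) := by
  have hT' := hT.card_pos
  rcases le_or_gt #T n with h | h
  · obtain ⟨m, rfl⟩ := Nat.exists_eq_add_of_le' h
    rw [filter_support_eq_map_finsuppAntidiag hTs, card_map, card_finsuppAntidiag_nat_eq_choose,
      add_comm, ← Nat.choose_symm (by lia)]
    congr 1
    lia
  · rw [Nat.choose_eq_zero_of_lt (by lia), card_eq_zero, filter_eq_empty_iff]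
    rintro f hf rfl
    have := card_support_le_degree f
    rw [(mem_finsuppAntidiag_iff_degree.1 hf).1] at this
    lia

theorem card_filter_powerset_inter_sdiff [DecidableEq α] {X L : Finset α} (hL : L ⊆ X)
    (p q : Finset α → Prop) [DecidablePred p] [DecidablePred q] :
    #{S ∈ X.powerset | p (S ∩ L) ∧ q (S \ L)} =
      #{A ∈ L.powerset | p A} * #{B ∈ (X \ L).powerset | q B} := by
  rw [← card_product]
  have hinter {A B : Finset α} (hA : A ⊆ L) (hB : B ⊆ X \ L) : (A ∪ B) ∩ L = A := by grind
  have hsdiff {A B : Finset α} (hA : A ⊆ L) (hB : B ⊆ X \ L) : (A ∪ B) \ L = B := by grind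
  refine card_nbij' (fun S => (S ∩ L, S \ L)) (fun AB => AB.1 ∪ AB.2) ?_ ?_ ?_ ?_
  · intro S hS
    simp only [coe_filter, mem_powerset, Set.mem_ofPred_eq] at hS
    simp only [coe_product, coe_filter, mem_powerset, Set.mem_prod, Set.mem_ofPred_eq]
    exact ⟨⟨inter_subset_right, hS.2.1⟩, sdiff_subset_sdiff hS.1 Subset.rfl, hS.2.2⟩
  · rintro ⟨A, B⟩ h
    simp only [coe_product, coe_filter, mem_powerset, Set.mem_prod, Set.mem_ofPred_eq] at h
    obtain ⟨⟨hA, hpA⟩, hB, hqB⟩ := h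
    simp only [coe_filter, mem_powerset, Set.mem_ofPred_eq]
    rw [hinter hA hB, hsdiff hA hB]
    exact ⟨union_subset (hA.trans hL) (hB.trans sdiff_subset), hpA, hqB⟩
  · exact fun S _ => (union_comm _ _).trans (sdiff_union_inter S L)
  · rintro ⟨A, B⟩ h
    simp only [coe_product, coe_filter, mem_powerset, Set.mem_prod, Set.mem_ofPred_eq] at h
    exact Prod.ext (hinter h.1.1 h.2.1) (hsdiff h.1.1 h.2.1)

theorem iChoose_natCast (x y : ℕ) : iChoose x y = x.choose y := by
  by_cases h : y ≤ x
  · simp [iChoose, h]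
  · simp [iChoose, h, Nat.choose_eq_zero_of_lt (not_le.1 h)]

theorem iChoose_eq_zero_of_neg (x : ℤ) {y : ℤ} (hy : y < 0) : iChoose x y = 0 :=
  if_neg fun h => hy.not_ge h.1

theorem card_filter_powerset_card_eq (X : Finset α) (a : ℤ) :
    #{A ∈ X.powerset | (#A : ℤ) = a} = iChoose #X a := by
  rcases le_or_gt 0 a with ha | ha
  · lift a to ℕ using ha
    simp_rw [Nat.cast_inj, ← powersetCard_eq_filter, card_powersetCard, iChoose_natCast]
  · rw [iChoose_eq_zero_of_neg _ ha, card_eq_zero, filter_eq_empty_iff]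
    exact fun A _ h => by lia

end Counting

section Relabelling

/-- If `f g` new points are inserted directly after each old point `g`, then `relabel f j` is the
position that the old point `j` ends up in. The origin `0` counts as an old point that stays in
place, so `f 0` is the number of new points inserted at the very beginning. -/
def relabel (f : ℕ →₀ ℕ) (j : ℕ) : ℕ := j + ∑ g ∈ range j, f g

/-- The positions taken by the new points when `f g` of them are inserted after each old point
`g`. -/
def insertedBlock (f : ℕ →₀ ℕ) : Finset ℕ :=
  f.support.biUnion fun g => Ioo (relabel f g) (relabel f (g + 1))

variable (f : ℕ →₀ ℕ)

@[simp]
theorem relabel_zero : relabel f 0 = 0 := rfl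

theorem relabel_succ (j : ℕ) : relabel f (j + 1) = relabel f j + f j + 1 := by
  simp only [relabel, sum_range_succ]
  ring

theorem relabel_strictMono : StrictMono (relabel f) :=
  strictMono_nat_of_lt_succ fun j => by rw [relabel_succ]; lia

theorem relabel_injective : Function.Injective (relabel f) :=
  (relabel_strictMono f).injective

variable {f}

theorem relabel_eq_relabel_add_one_iff {i j : ℕ} :
    relabel f i = relabel f j + 1 ↔ i = j + 1 ∧ f j = 0 := by
  constructor
  · intro h
    have hji : j + 1 ≤ i := (relabel_strictMono f).lt_iff_lt.1 (by lia)
    have hle := (relabel_strictMono f).monotone hji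
    have hsucc := relabel_succ f j
    exact ⟨relabel_injective f (by lia), by lia⟩
  · rintro ⟨rfl, hj⟩
    rw [relabel_succ, hj, add_zero]

theorem mem_insertedBlock {x : ℕ} : x ∈ insertedBlock f ↔ x ∉ Set.range (relabel f) := by
  simp only [insertedBlock, mem_biUnion, mem_Ioo, Set.mem_range, not_exists]
  constructor
  · rintro ⟨g, -, hgx, hxg⟩ j rfl
    rw [(relabel_strictMono f).lt_iff_lt] at hgx hxg
    lia
  · intro hx
    obtain ⟨g, hgx, hxg⟩ : ∃ g, relabel f g ≤ x ∧ x < relabel f (g + 1) := by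
      have hunbdd := (relabel_strictMono f).not_bddAbove_range_of_isSuccArchimedean
      have := iUnion_Ico_map_succ_eq_Ici (fun a => (relabel_strictMono f).monotone bot_le) hunbdd
      have := this.ge (Nat.zero_le x)
      simpa using this
    have hgx' := lt_of_le_of_ne hgx (hx g)
    rw [relabel_succ] at hxg
    exact ⟨g, Finsupp.mem_support_iff.2 (by lia), hgx', by rwa [relabel_succ]⟩

theorem relabel_notMem_insertedBlock (j : ℕ) : relabel f j ∉ insertedBlock f :=
  fun h => mem_insertedBlock.1 h ⟨j, rfl⟩

theorem zero_notMem_insertedBlock : 0 ∉ insertedBlock f :=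
  relabel_notMem_insertedBlock 0

theorem relabel_add_one_mem_insertedBlock {g : ℕ} :
    relabel f g + 1 ∈ insertedBlock f ↔ f g ≠ 0 := by
  simp [mem_insertedBlock, relabel_eq_relabel_add_one_iff]

theorem one_mem_insertedBlock : 1 ∈ insertedBlock f ↔ f 0 ≠ 0 :=
  relabel_add_one_mem_insertedBlock (g := 0)

variable (f) in
theorem card_insertedBlock : #(insertedBlock f) = f.degree := by
  rw [insertedBlock, card_biUnion, Finsupp.degree_apply]
  · refine sum_congr rfl fun g _ => ?_
    rw [Nat.card_Ioo, relabel_succ]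
    lia
  · intro g _ h _ hgh
    have := (relabel_strictMono f).monotone.pairwise_disjoint_on_Ioo_succ hgh
    simpa [Function.onFun, ← disjoint_coe] using this

theorem insertedBlock_injective : Function.Injective insertedBlock := by
  intro f f' h
  have hrange : Set.range (relabel f) = Set.range (relabel f') := by
    ext x
    rw [← not_iff_not, ← mem_insertedBlock, ← mem_insertedBlock, h]
  have hrelabel := ((relabel_strictMono f).range_inj (relabel_strictMono f')).1 hrange
  ext g
  have := relabel_succ f g
  have := relabel_succ f' g
  rw [hrelabel] at *
  lia

theorem exists_insertedBlock_eq {B : Finset ℕ} (hB : 0 ∉ B) : ∃ f, insertedBlock f = B := by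
  have hinf : {x | x ∉ B}.Infinite := B.finite_toSet.infinite_compl
  set σ := Nat.nth (· ∉ B)
  have hσ : StrictMono σ := Nat.nth_strictMono hinf
  have hrange : Set.range σ = {x | x ∉ B} := Nat.range_nth_of_infinite hinf
  have hσ0 : σ 0 = 0 := Nat.nth_zero_of_zero hB
  have hsupp {g : ℕ} (hg : σ (g + 1) - σ g - 1 ≠ 0) : g ∈ range (B.sup id) := by
    have hmem : σ g + 1 ∈ B := by
      by_contra hmem
      obtain ⟨j, hj⟩ := hrange.ge hmem
      have h1 : g < j := hσ.lt_iff_lt.1 (by lia)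
      have h2 : j < g + 1 := hσ.lt_iff_lt.1 (by lia)
      lia
    have := le_sup (f := id) hmem
    have := hσ.le_apply (x := g)
    simp only [id, mem_range] at *
    lia
  let f : ℕ →₀ ℕ :=
    Finsupp.onFinset (range (B.sup id)) (fun g => σ (g + 1) - σ g - 1) fun _ => hsupp
  have hf : relabel f = σ := by
    funext j
    induction j with
    | zero => rw [relabel_zero, hσ0]
    | succ j ih =>
      have := hσ j.lt_add_one
      rw [relabel_succ, ih, Finsupp.onFinset_apply]
      lia
  refine ⟨f, ?_⟩
  ext x
  rw [mem_insertedBlock, hf, hrange, Set.mem_ofPred_eq, not_not]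

theorem relabel_eq_add_degree {j : ℕ} (hf : f.support ⊆ range j) : relabel f j = j + f.degree := by
  rw [relabel, Finsupp.degree_apply, sum_subset hf fun g _ hg => Finsupp.notMem_support_iff.1 hg]

theorem relabel_mem_Icc_iff {M j : ℕ} (hf : f.support ⊆ range (M + 1)) :
    relabel f j ∈ Icc 1 (M + f.degree) ↔ j ∈ Icc 1 M := by
  have hlo := (relabel_strictMono f).lt_iff_lt (a := 0) (b := j)
  have hhi := (relabel_strictMono f).lt_iff_lt (a := j) (b := M + 1)
  rw [relabel_zero] at hlo
  rw [relabel_eq_add_degree hf] at hhi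
  simp only [mem_Icc]
  lia

theorem insertedBlock_subset_Icc_iff {M : ℕ} :
    insertedBlock f ⊆ Icc 1 (M + f.degree) ↔ f.support ⊆ range (M + 1) := by
  constructor
  · intro h
    rcases f.support.eq_empty_or_nonempty with hf | hf
    · simp [hf]
    · set g := f.support.max' hf
      have hg : f.support ⊆ range (g + 1) := fun i hi => by
        have := f.support.le_max' i hi
        simp only [mem_range]; lia
      have hlast : relabel f (g + 1) - 1 ∈ insertedBlock f := by
        have hfg := Finsupp.mem_support_iff.1 (f.support.max'_mem hf)
        have := relabel_succ f g
        exact mem_biUnion.2 ⟨g, f.support.max'_mem hf, mem_Ioo.2 (by lia)⟩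
      have := mem_Icc.1 (h hlast)
      rw [relabel_eq_add_degree hg] at this
      exact hg.trans (range_mono (by lia))
  · intro hf x hx
    have hx0 : x ≠ 0 := fun h => zero_notMem_insertedBlock (h ▸ hx)
    obtain ⟨g, hg, hgx⟩ := mem_biUnion.1 hx
    have hle := (relabel_strictMono f).monotone (mem_range.1 (hf hg))
    rw [Nat.succ_eq_add_one, relabel_eq_add_degree hf] at hle
    rw [mem_Ioo] at hgx
    rw [mem_Icc]
    lia

end Relabelling

section Loops

/-- The loops of a single block `b`: the `i` such that both `i` and `i + 1` lie in `b`. -/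
def blockLoops (b : Finset ℕ) : Finset ℕ := {i ∈ b | i + 1 ∈ b}

/-- The loops of a diagram `P`, as a finite set that does not mention the number of points. -/
def loops (P : Finset (Finset ℕ)) : Finset ℕ := P.biUnion blockLoops

theorem mem_blockLoops {b : Finset ℕ} {i : ℕ} : i ∈ blockLoops b ↔ i ∈ b ∧ i + 1 ∈ b :=
  mem_filter

theorem mem_loops {P : Finset (Finset ℕ)} {i : ℕ} :
    i ∈ loops P ↔ ∃ b ∈ P, i ∈ b ∧ i + 1 ∈ b := by
  simp only [loops, mem_biUnion, mem_blockLoops]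

theorem loops_subset_Icc {N : ℕ} {P : Finset (Finset ℕ)}
    (hP : ∀ b ∈ P, ∀ x ∈ b, x ∈ Icc 1 N) : loops P ⊆ Icc 1 N := fun i hi => by
  obtain ⟨b, hb, hib, -⟩ := mem_loops.1 hi
  exact hP b hb i hib

theorem linLoops_eq_card_loops {N : ℕ} {P : Finset (Finset ℕ)}
    (hP : ∀ b ∈ P, ∀ x ∈ b, x ∈ Icc 1 N) : linLoops N P = #(loops P) := by
  rw [linLoops, ← Set.ncard_coe_finset]
  congr 1
  ext i
  simp only [Set.mem_ofPred_eq, mem_coe, mem_loops]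
  constructor
  · exact fun h => h.2.2
  · rintro ⟨b, hb, hi, hi'⟩
    exact ⟨(mem_Icc.1 (hP b hb i hi)).1, (mem_Icc.1 (hP b hb _ hi')).2, b, hb, hi, hi'⟩

variable {f : ℕ →₀ ℕ}

/-- Each gap in the support of `f` holds one run of new points, and every point of a run except its
first one ends a loop. -/
theorem image_add_one_blockLoops_insertedBlock :
    (blockLoops (insertedBlock f)).image (· + 1) =
      insertedBlock f \ f.support.image (relabel f · + 1) := by
  ext x
  cases x with
  | zero => simp [zero_notMem_insertedBlock]
  | succ y =>
    simp only [mem_image, add_left_inj, exists_eq_right, mem_blockLoops, mem_sdiff,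
      Finsupp.mem_support_iff]
    rw [mem_insertedBlock (x := y), and_comm, and_congr_right_iff]
    refine fun hy => not_congr ⟨?_, ?_⟩
    · rintro ⟨g, rfl⟩
      exact ⟨g, relabel_add_one_mem_insertedBlock.1 hy, rfl⟩
    · rintro ⟨g, -, hg⟩
      exact ⟨g, hg⟩

theorem card_blockLoops_insertedBlock :
    #(blockLoops (insertedBlock f)) + #f.support = f.degree := by
  have hsub : f.support.image (relabel f · + 1) ⊆ insertedBlock f := by
    simp +contextual [image_subset_iff, relabel_add_one_mem_insertedBlock]
  have hinj : Function.Injective (relabel f · + 1) :=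
    (add_left_injective 1).comp (relabel_injective f)
  rw [← card_insertedBlock, ← card_sdiff_add_card_eq_card hsub,
    ← image_add_one_blockLoops_insertedBlock, card_image_of_injective _ (add_left_injective 1),
    card_image_of_injective _ hinj]

theorem blockLoops_image_relabel (c : Finset ℕ) :
    blockLoops (c.image (relabel f)) = (blockLoops c \ f.support).image (relabel f) := by
  ext x
  simp only [mem_blockLoops, mem_image, mem_sdiff, Finsupp.mem_support_iff, not_not]
  constructor
  · rintro ⟨⟨j, hj, rfl⟩, i, hi, hij⟩
    obtain ⟨rfl, hfj⟩ := relabel_eq_relabel_add_one_iff.1 hij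
    exact ⟨j, ⟨⟨hj, hi⟩, hfj⟩, rfl⟩
  · rintro ⟨j, ⟨⟨hj, hj'⟩, hfj⟩, rfl⟩
    exact ⟨⟨j, hj, rfl⟩, j + 1, hj', relabel_eq_relabel_add_one_iff.2 ⟨rfl, hfj⟩⟩

end Loops

theorem IsLinearDiagram.eq_of_mem_of_mem {N d x : ℕ} {P : Finset (Finset ℕ)} {b c : Finset ℕ}
    (hP : IsLinearDiagram N d P) (hb : b ∈ P) (hc : c ∈ P) (hxb : x ∈ b) (hxc : x ∈ c) : b = c :=
  (hP.2.2 x (hP.2.1 b hb x hxb)).unique ⟨hb, hxb⟩ ⟨hc, hxc⟩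

section Insertion

/-- The diagram obtained from `P` by inserting a new block with `f g` points directly after each
old point `g`. -/
def insertBlock (f : ℕ →₀ ℕ) (P : Finset (Finset ℕ)) : Finset (Finset ℕ) :=
  insert (insertedBlock f) (P.image (image (relabel f)))

variable {f : ℕ →₀ ℕ} {P : Finset (Finset ℕ)}

theorem loops_insertBlock :
    loops (insertBlock f P) =
      blockLoops (insertedBlock f) ∪ (loops P \ f.support).image (relabel f) := by
  have hsdiff : loops P \ f.support = P.biUnion fun c => blockLoops c \ f.support := by
    simp only [sdiff_eq_filter, loops, filter_biUnion]
  rw [hsdiff, insertBlock, loops, biUnion_insert, image_biUnion, biUnion_image]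
  simp only [blockLoops_image_relabel]

theorem card_loops_insertBlock :
    #(loops (insertBlock f P)) + #f.support = f.degree + #(loops P \ f.support) := by
  have hdisj : Disjoint (blockLoops (insertedBlock f))
      ((loops P \ f.support).image (relabel f)) := by
    simp only [disjoint_right, forall_mem_image]
    exact fun j _ hj => relabel_notMem_insertedBlock j (mem_blockLoops.1 hj).1
  rw [loops_insertBlock, card_union_of_disjoint hdisj,
    card_image_of_injective _ (relabel_injective f), ← card_blockLoops_insertedBlock]
  ring

theorem existsUnique_mem_insertBlock_of_mem_insertedBlock {x : ℕ} (hx : x ∈ insertedBlock f) :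
    ∃! b, b ∈ insertBlock f P ∧ x ∈ b := by
  refine ⟨insertedBlock f, ⟨mem_insert_self _ _, hx⟩, ?_⟩
  simp only [insertBlock, mem_insert, mem_image]
  rintro _ ⟨rfl | ⟨c, -, rfl⟩, hxb⟩
  · rfl
  · obtain ⟨j, -, rfl⟩ := mem_image.1 hxb
    exact absurd hx (relabel_notMem_insertedBlock j)

theorem existsUnique_relabel_mem_insertBlock_iff {j : ℕ} :
    (∃! b, b ∈ insertBlock f P ∧ relabel f j ∈ b) ↔ ∃! c, c ∈ P ∧ j ∈ c := by
  have hmem (b : Finset ℕ) : b ∈ insertBlock f P ∧ relabel f j ∈ b ↔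
      ∃ c, (c ∈ P ∧ j ∈ c) ∧ c.image (relabel f) = b := by
    simp only [insertBlock, mem_insert, mem_image]
    constructor
    · rintro ⟨rfl | ⟨c, hc, rfl⟩, hj⟩
      · exact absurd hj (relabel_notMem_insertedBlock j)
      · exact ⟨c, ⟨hc, (relabel_injective f).mem_finset_image.1 hj⟩, rfl⟩
    · rintro ⟨c, ⟨hc, hj⟩, rfl⟩
      exact ⟨Or.inr ⟨c, hc, rfl⟩, mem_image_of_mem _ hj⟩
  simp only [hmem]
  constructor
  · rintro ⟨_, ⟨c, hc, rfl⟩, huniq⟩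
    exact ⟨c, hc, fun c' hc' => image_injective (relabel_injective f) (huniq _ ⟨c', hc', rfl⟩)⟩
  · rintro ⟨c, hc, huniq⟩
    refine ⟨_, ⟨c, hc, rfl⟩, ?_⟩
    rintro _ ⟨c', hc', rfl⟩
    rw [huniq c' hc']

theorem isLinearDiagram_insertBlock_iff {M : ℕ} (hf : f.support ⊆ range (M + 1)) :
    IsLinearDiagram (M + f.degree) f.degree (insertBlock f P) ↔ IsLinearDiagram M f.degree P := by
  have hcover : (∀ x ∈ Icc 1 (M + f.degree), ∃! b, b ∈ insertBlock f P ∧ x ∈ b) ↔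
      ∀ j ∈ Icc 1 M, ∃! c, c ∈ P ∧ j ∈ c := by
    constructor
    · intro h j hj
      exact existsUnique_relabel_mem_insertBlock_iff.1 (h _ ((relabel_mem_Icc_iff hf).2 hj))
    · intro h x hx
      by_cases hxB : x ∈ insertedBlock f
      · exact existsUnique_mem_insertBlock_of_mem_insertedBlock hxB
      · rw [mem_insertedBlock, not_not] at hxB
        obtain ⟨j, rfl⟩ := hxB
        exact existsUnique_relabel_mem_insertBlock_iff.2 (h j ((relabel_mem_Icc_iff hf).1 hx))
  rw [IsLinearDiagram, hcover]
  simp only [IsLinearDiagram, insertBlock, forall_mem_insert, forall_mem_image,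
    relabel_mem_Icc_iff hf, card_insertedBlock, card_image_of_injective _ (relabel_injective f),
    true_and]
  have hB : ∀ x ∈ insertedBlock f, x ∈ Icc 1 (M + f.degree) := insertedBlock_subset_Icc_iff.2 hf
  tauto

theorem insertedBlock_notMem_image_relabel (hf : f 0 ≠ 0) :
    insertedBlock f ∉ P.image (image (relabel f)) := by
  intro h
  obtain ⟨c, -, hc⟩ := mem_image.1 h
  have hone := one_mem_insertedBlock.2 hf
  obtain ⟨j, -, hj⟩ := mem_image.1 (hc ▸ hone)
  exact relabel_notMem_insertedBlock j (hj ▸ hone)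

theorem insertBlock_inj {f' : ℕ →₀ ℕ} {P' : Finset (Finset ℕ)} {N d : ℕ}
    (hQ : IsLinearDiagram N d (insertBlock f P)) (hf : f 0 ≠ 0) (hf' : f' 0 ≠ 0) :
    insertBlock f P = insertBlock f' P' ↔ f = f' ∧ P = P' := by
  refine ⟨fun h => ?_, by rintro ⟨rfl, rfl⟩; rfl⟩
  have hblock : insertedBlock f = insertedBlock f' :=
    hQ.eq_of_mem_of_mem (mem_insert_self _ _) (h ▸ mem_insert_self _ _)
      (one_mem_insertedBlock.2 hf) (one_mem_insertedBlock.2 hf')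
  obtain rfl := insertedBlock_injective hblock
  have himage := congrArg (erase · (insertedBlock f)) h
  simp only [insertBlock, erase_insert (insertedBlock_notMem_image_relabel hf)] at himage
  exact ⟨rfl, image_injective (image_injective (relabel_injective f)) himage⟩

theorem IsLinearDiagram.exists_eq_insertBlock {N d : ℕ} {Q : Finset (Finset ℕ)}
    (hQ : IsLinearDiagram N d Q) (hN : 0 < N) : ∃ f P, f 0 ≠ 0 ∧ insertBlock f P = Q := by
  obtain ⟨B, ⟨hB, h1B⟩, -⟩ := hQ.2.2 1 (mem_Icc.2 ⟨le_rfl, hN⟩)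
  have h0B : 0 ∉ B := fun h => by simpa using hQ.2.1 B hB 0 h
  obtain ⟨f, rfl⟩ := exists_insertedBlock_eq h0B
  have hsub : (↑(Q.erase (insertedBlock f)) : Set _) ⊆ Set.range (image (relabel f)) := by
    intro b hb
    obtain ⟨hne, hbQ⟩ := mem_erase.1 hb
    have : (b : Set ℕ) ⊆ Set.range (relabel f) := fun x hx => by
      by_contra hx'
      exact hne (hQ.eq_of_mem_of_mem hbQ hB hx (mem_insertedBlock.2 hx'))
    obtain ⟨c, -, hc⟩ := subset_set_image_iff.1 (Set.image_univ ▸ this)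
    exact ⟨c, hc⟩
  obtain ⟨P, -, hP⟩ := subset_set_image_iff.1 (Set.image_univ ▸ hsub)
  exact ⟨f, P, one_mem_insertedBlock.1 h1B, by rw [insertBlock, hP, insert_erase hB]⟩

end Insertion

section Recurrence

/-- The gap multiplicities `f` describing the ways to insert a block of size `d` that contains the
first point into a diagram on `M` points. -/
def gapPatterns (M d : ℕ) : Finset (ℕ →₀ ℕ) := {f ∈ (range (M + 1)).finsuppAntidiag d | f 0 ≠ 0}

open scoped Classical in
/-- The finite set of diagrams on `N` points with blocks of size `d`. -/
noncomputable def linearDiagrams (N d : ℕ) : Finset (Finset (Finset ℕ)) :=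
  {P ∈ (Icc 1 N).powerset.powerset | IsLinearDiagram N d P}

/-- The coefficient `c(n,k,t)` of the recurrence, with `M = d (n - 1)`. -/
def recCoeff (d : ℕ) (M : ℤ) (k : ℕ) (t : ℤ) : ℕ :=
  ∑ i ∈ range d, (d - 1).choose i * iChoose t (t + i - k) * iChoose (M - t) (d - 2 * i - t + k - 1)

variable {M N d k : ℕ}

theorem mem_gapPatterns {f : ℕ →₀ ℕ} :
    f ∈ gapPatterns M d ↔ f.degree = d ∧ f.support ⊆ range (M + 1) ∧ f 0 ≠ 0 := by
  rw [gapPatterns, mem_filter, mem_finsuppAntidiag_iff_degree, and_assoc]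

theorem mem_linearDiagrams {P : Finset (Finset ℕ)} :
    P ∈ linearDiagrams N d ↔ IsLinearDiagram N d P := by
  simp only [linearDiagrams, mem_filter, mem_powerset, and_iff_right_iff_imp]
  exact fun h b hb => mem_powerset.2 (h.2.1 b hb)

theorem numA_eq_card_filter_linearDiagrams (d n k : ℕ) :
    numA d n k = #{P ∈ linearDiagrams (n * d) d | #(loops P) = k} := by
  rw [numA, ← Set.ncard_coe_finset]
  congr 1
  ext P
  simp only [Set.mem_ofPred_eq, coe_filter, mem_linearDiagrams]
  exact and_congr_right fun hP => by rw [linLoops_eq_card_loops hP.2.1]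

theorem numAZ_eq_card_filter_linearDiagrams (d n : ℕ) (t : ℤ) :
    numAZ d n t = #{P ∈ linearDiagrams (n * d) d | (#(loops P) : ℤ) = t} := by
  rcases le_or_gt 0 t with ht | ht
  · lift t to ℕ using ht
    simp_rw [numAZ, if_pos t.cast_nonneg, Int.toNat_natCast, numA_eq_card_filter_linearDiagrams,
      Nat.cast_inj]
  · rw [numAZ, if_neg ht.not_ge, eq_comm, card_eq_zero, filter_eq_empty_iff]
    exact fun P _ h => by lia

theorem card_filter_gapPatterns_support_eq {S : Finset ℕ} (hd : 0 < d) (hS : S ⊆ Icc 1 M) :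
    #{f ∈ gapPatterns M d | f.support.erase 0 = S} = (d - 1).choose #S := by
  have h0 : 0 ∉ S := fun h => by simpa using hS h
  have hsub : insert 0 S ⊆ range (M + 1) :=
    insert_subset (by simp) fun g hg => by
      have := mem_Icc.1 (hS hg)
      exact mem_range.2 (by lia)
  have := card_filter_support_eq hsub (insert_nonempty 0 S) hd
  rw [card_insert_of_notMem h0, Nat.add_sub_cancel] at this
  rw [← this, gapPatterns, filter_filter]
  congr 1
  refine filter_congr fun f _ => ?_
  rw [← Finsupp.mem_support_iff]
  constructor
  · rintro ⟨hf, rfl⟩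
    exact (insert_erase hf).symm
  · intro hf
    rw [hf]
    exact ⟨mem_insert_self _ _, erase_insert h0⟩

theorem card_filter_gapPatterns (hd : 0 < d) (p : Finset ℕ → Prop) [DecidablePred p] :
    #{f ∈ gapPatterns M d | p (f.support.erase 0)} =
      ∑ S ∈ (Icc 1 M).powerset with p S, (d - 1).choose #S := by
  have hmaps : ∀ f ∈ ({f ∈ gapPatterns M d | p (f.support.erase 0)} : Finset _),
      f.support.erase 0 ∈ ({S ∈ (Icc 1 M).powerset | p S} : Finset _) := by
    intro f hf
    obtain ⟨hf, hpf⟩ := mem_filter.1 hf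
    refine mem_filter.2 ⟨mem_powerset.2 fun g hg => ?_, hpf⟩
    obtain ⟨hg0, hg⟩ := mem_erase.1 hg
    have := mem_range.1 ((mem_gapPatterns.1 hf).2.1 hg)
    exact mem_Icc.2 (by lia)
  rw [card_eq_sum_card_fiberwise hmaps]
  refine sum_congr rfl fun S hS => ?_
  obtain ⟨hS, hpS⟩ := mem_filter.1 hS
  rw [← card_filter_gapPatterns_support_eq hd (mem_powerset.1 hS), filter_filter]
  congr 1
  refine filter_congr fun f _ => and_iff_right_of_imp ?_
  rintro rfl
  exact hpS

theorem iChoose_mul_iChoose_eq_card {X L : Finset ℕ} (hL : L ⊆ X) (d k i : ℕ) :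
    iChoose #L (#L + i - k) * iChoose (#X - #L) (d - 2 * i - #L + k - 1) =
      #{S ∈ X.powerset | k + #S + 1 = d + #(L \ S) ∧ #S + i + 1 = d} := by
  rw [← Nat.cast_sub (card_le_card hL), ← card_sdiff_of_subset hL,
    ← card_filter_powerset_card_eq, ← card_filter_powerset_card_eq,
    ← card_filter_powerset_inter_sdiff hL]
  congr 1
  refine filter_congr fun S _ => ?_
  have := card_inter_add_card_sdiff S L
  have := card_inter_add_card_sdiff L S
  rw [inter_comm] at this
  lia

theorem sum_range_choose_ite (hd : 0 < d) (s : ℕ) :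
    (∑ i ∈ range d, if s + i + 1 = d then (d - 1).choose i else 0) = (d - 1).choose s := by
  rcases lt_or_ge s d with hs | hs
  · have (i : ℕ) : s + i + 1 = d ↔ d - 1 - s = i := by lia
    simp only [this]
    rw [sum_ite_eq, if_pos (mem_range.2 (by lia)), Nat.choose_symm (by lia)]
  · rw [Nat.choose_eq_zero_of_lt (by lia)]
    exact sum_eq_zero fun i _ => if_neg (by lia)

theorem recCoeff_eq_sum_powerset_choose {X L : Finset ℕ} (hL : L ⊆ X) (hd : 0 < d) (k : ℕ) :
    recCoeff d #X k #L =
      ∑ S ∈ X.powerset with k + #S + 1 = d + #(L \ S), (d - 1).choose #S := by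
  simp only [recCoeff, mul_assoc, iChoose_mul_iChoose_eq_card hL]
  calc
    _ = ∑ i ∈ range d, ∑ S ∈ X.powerset with k + #S + 1 = d + #(L \ S),
          if #S + i + 1 = d then (d - 1).choose i else 0 := by
      refine sum_congr rfl fun i _ => ?_
      rw [← sum_filter, filter_filter, sum_const, smul_eq_mul, mul_comm]
    _ = _ := by
      rw [sum_comm]
      exact sum_congr rfl fun S _ => sum_range_choose_ite hd _

theorem card_filter_gapPatterns_eq_recCoeff {L : Finset ℕ} (hL : L ⊆ Icc 1 M) (hd : 0 < d)
    (k : ℕ) :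
    #{f ∈ gapPatterns M d | k + #f.support = d + #(L \ f.support)} = recCoeff d M k #L := by
  have hX := recCoeff_eq_sum_powerset_choose hL hd k
  rw [Nat.card_Icc, Nat.add_sub_cancel] at hX
  rw [hX, ← card_filter_gapPatterns hd]
  congr 1
  refine filter_congr fun f hf => ?_
  have hf0 := Finsupp.mem_support_iff.2 (mem_gapPatterns.1 hf).2.2
  have hsdiff : L \ f.support.erase 0 = L \ f.support := by
    have : 0 ∉ L := fun h => by simpa using hL h
    grind
  rw [hsdiff, add_assoc, card_erase_add_one hf0]

theorem card_filter_linearDiagrams_add (hd : 0 < d) (k : ℕ) :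
    #{Q ∈ linearDiagrams (M + d) d | #(loops Q) = k} =
      ∑ P ∈ linearDiagrams M d,
        #{f ∈ gapPatterns M d | k + #f.support = d + #(loops P \ f.support)} := by
  rw [← card_sigma]
  symm
  refine card_nbij (fun p => insertBlock p.2 p.1) ?_ ?_ ?_
  · rintro ⟨P, f⟩ hp
    simp only [mem_coe, mem_sigma, mem_filter, mem_gapPatterns, mem_linearDiagrams] at hp ⊢
    obtain ⟨hP, ⟨rfl, hf, -⟩, hk⟩ := hp
    have := card_loops_insertBlock (f := f) (P := P)
    exact ⟨(isLinearDiagram_insertBlock_iff hf).2 hP, by lia⟩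
  · rintro ⟨P, f⟩ hp ⟨P', f'⟩ hp' h
    simp only [mem_coe, mem_sigma, mem_filter, mem_gapPatterns, mem_linearDiagrams] at hp hp'
    obtain ⟨hP, ⟨rfl, hf, hf0⟩, -⟩ := hp
    obtain ⟨rfl, rfl⟩ :=
      (insertBlock_inj ((isLinearDiagram_insertBlock_iff hf).2 hP) hf0 hp'.2.1.2.2).1 h
    rfl
  · intro Q hQ
    simp only [mem_coe, mem_filter, mem_linearDiagrams] at hQ
    obtain ⟨hQ, rfl⟩ := hQ
    obtain ⟨f, P, hf0, rfl⟩ := hQ.exists_eq_insertBlock (by lia)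
    obtain rfl : f.degree = d := by
      rw [← card_insertedBlock]
      exact hQ.1 _ (mem_insert_self _ _)
    have hf : f.support ⊆ range (M + 1) :=
      insertedBlock_subset_Icc_iff.1 (hQ.2.1 _ (mem_insert_self _ _))
    refine ⟨⟨P, f⟩, ?_, rfl⟩
    simp only [mem_coe, mem_sigma, mem_filter, mem_gapPatterns, mem_linearDiagrams]
    exact ⟨(isLinearDiagram_insertBlock_iff hf).1 hQ, ⟨trivial, hf, hf0⟩, card_loops_insertBlock⟩

theorem numA_succ_eq_sum_recCoeff (hd : 0 < d) (n k : ℕ) :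
    numA d (n + 1) k = ∑ P ∈ linearDiagrams (n * d) d, recCoeff d (n * d : ℕ) k #(loops P) := by
  rw [numA_eq_card_filter_linearDiagrams, Nat.succ_mul, card_filter_linearDiagrams_add hd]
  refine sum_congr rfl fun P hP => ?_
  exact card_filter_gapPatterns_eq_recCoeff (loops_subset_Icc (mem_linearDiagrams.1 hP).2.1) hd k

theorem recCoeff_eq_zero_of_notMem_Icc {m t : ℤ} (ht : t ∉ Icc ((k : ℤ) - d + 1) (k + d - 1)) :
    recCoeff d m k t = 0 := by
  refine sum_eq_zero fun i hi => ?_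
  rw [mem_range] at hi
  rw [mem_Icc, not_and_or, not_le, not_le] at ht
  rcases ht with ht | ht
  · rw [iChoose_eq_zero_of_neg t (by lia), mul_zero, zero_mul]
  · rw [iChoose_eq_zero_of_neg (m - t) (by lia), mul_zero]

end Recurrence

/-- the basic recurrence for `a(n,k)`. -/
theorem linear_recurrence (d : ℕ) (hd : 2 ≤ d) (n : ℕ) (hn : 1 ≤ n) (k : ℕ)
    (hk : k ≤ n * (d - 1)) :
    numA d n k =
      ∑ t ∈ Finset.Icc ((k : ℤ) - d + 1) ((k : ℤ) + d - 1),
        (∑ i ∈ Finset.range d,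
            (d - 1).choose i * iChoose t (t + i - k) *
              iChoose ((d : ℤ) * ((n : ℤ) - 1) - t) ((d : ℤ) - 2 * i - t + k - 1)) *
          numAZ d (n - 1) t := by
  obtain ⟨n, rfl⟩ := Nat.exists_eq_add_of_le' hn
  have hM : (d : ℤ) * ((n + 1 : ℕ) - 1) = (n * d : ℕ) := by push_cast; ring
  rw [Nat.add_sub_cancel, hM]
  calc
    numA d (n + 1) k = ∑ P ∈ linearDiagrams (n * d) d, recCoeff d (n * d : ℕ) k #(loops P) :=
      numA_succ_eq_sum_recCoeff (by lia) n k
    _ = ∑ P ∈ linearDiagrams (n * d) d with (#(loops P) : ℤ) ∈ Icc ((k : ℤ) - d + 1) (k + d - 1),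
          recCoeff d (n * d : ℕ) k #(loops P) := by
      refine (sum_filter_of_ne fun P _ => ?_).symm
      exact not_imp_comm.1 recCoeff_eq_zero_of_notMem_Icc
    _ = ∑ t ∈ Icc ((k : ℤ) - d + 1) (k + d - 1),
          ∑ P ∈ linearDiagrams (n * d) d with (#(loops P) : ℤ) = t, recCoeff d (n * d : ℕ) k t :=
      (sum_fiberwise_eq_sum_filter' _ _ _ _).symm
    _ = ∑ t ∈ Icc ((k : ℤ) - d + 1) (k + d - 1),
          recCoeff d (n * d : ℕ) k t * numAZ d n t := by
      simp_rw [sum_const, smul_eq_mul, numAZ_eq_card_filter_linearDiagrams, mul_comm]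
end

section
/- Fix integers d ≥ 2 and n ≥ 2, and let G be the complete n-partite graph K_{d,…,d}, i.e. the complete multipartite graph on vertex set Σ i : Fin n, Fin d in which two vertices are adjacent if and only if they lie in different parts. Then the number of pairs (v, p), where v is a vertex of G and p is a closed walk at v that is a Hamiltonian cycle of G, equals n! · (d!)^n · b(n). -/
/-!
Reading a closed walk of length `N` along `ZMod N` turns based Hamiltonian cycles into bijections
`e : ZMod N ≃ V` with `e i` adjacent to `e (i + 1)`. For a complete multipartite graph on
`V = Σ i, α i`, such an `e` is a colouring `fst ∘ e` of `ZMod N` with distinct consecutive colours,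
together with a bijection from each colour class onto the corresponding part: each colouring with
classes of size `d` contributes `(d!) ^ n`. Forgetting the names of the colours leaves a loopless
chord diagram, and each diagram arises from the `n!` ways of naming its `n` blocks.
-/

open Finset SimpleGraph

section Counting

lemma natCard_equiv_of_natCard_eq {α β : Type*} [Finite α] [Finite β]
    (h : Nat.card α = Nat.card β) : Nat.card (α ≃ β) = (Nat.card α).factorial := by
  obtain ⟨e⟩ := Finite.card_eq.1 h
  rw [Nat.card_congr ((Equiv.refl α).equivCongr e.symm), Nat.card_perm]

lemma natCard_subtype_eq_mul_of_fiber {α β : Type*} [Finite α] [Finite β] (f : α → β)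
    {p : α → Prop} {q : β → Prop} (hpq : ∀ x, p x ↔ q (f x)) {m : ℕ}
    (hm : ∀ y, q y → Nat.card {x // f x = y} = m) :
    Nat.card {x // p x} = m * Nat.card {y // q y} := by
  have := Fintype.ofFinite {y // q y}
  rw [← Nat.card_congr (Equiv.sigmaSubtypeFiberEquivSubtype f hpq), Nat.card_sigma,
    sum_congr rfl fun (y : {y // q y}) _ => hm y y.2]
  simp [mul_comm]

end Counting

section ClosedWalks

variable {V : Type*} {G : SimpleGraph V} {N : ℕ} [NeZero N]

lemma getVert_val_natCast {v : V} {p : G.Walk v v} (hp : p.length = N) {k : ℕ} (hk : k ≤ N) :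
    p.getVert (k : ZMod N).val = p.getVert k := by
  obtain hk | rfl := hk.lt_or_eq
  · rw [ZMod.val_natCast_of_lt hk]
  · simp [← hp]

lemma adj_getVert_val_add_one {v : V} {p : G.Walk v v} (hp : p.length = N) (i : ZMod N) :
    G.Adj (p.getVert i.val) (p.getVert (i + 1).val) := by
  have hnext : p.getVert (i + 1).val = p.getVert (i.val + 1) := by
    simpa using getVert_val_natCast hp (Nat.succ_le_of_lt i.val_lt)
  rw [hnext]
  exact p.adj_getVert_succ (i.val_lt.trans_eq hp.symm)

lemma exists_walk_getVert_eq (f : ℕ → V) (hf : ∀ i, G.Adj (f i) (f (i + 1))) (m : ℕ) :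
    ∃ p : G.Walk (f 0) (f m), p.length = m ∧ ∀ i ≤ m, p.getVert i = f i := by
  induction m generalizing f with
  | zero => exact ⟨.nil, rfl, by simp⟩
  | succ m ih =>
    obtain ⟨p, hlength, hvert⟩ := ih (fun i => f (i + 1)) fun i => hf (i + 1)
    refine ⟨.cons (hf 0) p, by simp [hlength], fun i hi => ?_⟩
    cases i with
    | zero => simp
    | succ i => simpa using hvert i (by lia)

lemma closedWalk_ext {p q : (v : V) × G.Walk v v} (hp : p.2.length = N) (hq : q.2.length = N)
    (h : ∀ i : ZMod N, p.2.getVert i.val = q.2.getVert i.val) : p = q := by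
  obtain ⟨v, p⟩ := p
  obtain ⟨w, q⟩ := q
  obtain rfl : v = w := by simpa using h 0
  congr 1
  refine Walk.ext_getVert_le_length (hp.trans hq.symm) fun k hk => ?_
  rw [← getVert_val_natCast hp (hk.trans_eq hp), h k, getVert_val_natCast hq (hk.trans_eq hp)]

lemma exists_closedWalk_getVert_eq (f : ZMod N → V) (hf : ∀ i, G.Adj (f i) (f (i + 1))) :
    ∃ p : (v : V) × G.Walk v v, p.2.length = N ∧ ∀ i : ZMod N, p.2.getVert i.val = f i := by
  obtain ⟨p, hlength, hvert⟩ :=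
    exists_walk_getVert_eq (fun k : ℕ => f k) (fun k => by simpa using hf k) N
  refine ⟨⟨_, p.copy rfl (by simp)⟩, by simpa using hlength, fun i => ?_⟩
  simpa using hvert i.val i.val_lt.le

variable (G N) in
/-- The cyclic vertex sequence of a based closed walk of length `N > 0`: index `i : ZMod N`
carries the vertex reached after `i` steps, so index `0` carries the base point. -/
noncomputable def closedWalkEquiv :
    {p : (v : V) × G.Walk v v // p.2.length = N} ≃
      {f : ZMod N → V // ∀ i, G.Adj (f i) (f (i + 1))} :=
  .ofBijective
    (fun p => ⟨fun i => p.1.2.getVert i.val, adj_getVert_val_add_one p.2⟩)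
    ⟨fun p q h => Subtype.ext <|
        closedWalk_ext p.2 q.2 <| congrFun (congrArg Subtype.val h),
      fun ⟨f, hf⟩ =>
        let ⟨p, hlength, hvert⟩ := exists_closedWalk_getVert_eq f hf
        ⟨⟨p, hlength⟩, Subtype.ext (funext hvert)⟩⟩

lemma isCycle_iff_injective (hN : 3 ≤ N) {v : V} {p : G.Walk v v} (hp : p.length = N) :
    p.IsCycle ↔ Function.Injective fun i : ZMod N => p.getVert i.val := by
  constructor
  · intro hcycle i j hij
    have hi := i.val_lt
    have hj := j.val_lt
    exact ZMod.val_injective N <|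
      hcycle.getVert_injOn' (by simp only [Set.mem_ofPred_eq]; lia)
        (by simp only [Set.mem_ofPred_eq]; lia) hij
  · intro hinj
    rw [Walk.isCycle_iff_isPath_tail_and_le_length, ← Walk.IsPath.getVert_injOn_iff]
    have hnil : ¬ p.Nil := by rw [← Walk.length_eq_zero_iff]; lia
    have htail := Walk.length_tail_add_one hnil
    refine ⟨fun i hi j hj hij => ?_, by lia⟩
    simp only [Set.mem_ofPred_eq] at hi hj
    rw [Walk.getVert_tail, Walk.getVert_tail,
      ← getVert_val_natCast hp (show i + 1 ≤ N by lia),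
      ← getVert_val_natCast hp (show j + 1 ≤ N by lia)] at hij
    have hcast : (i : ZMod N) = j := by simpa using hinj hij
    rw [ZMod.natCast_eq_natCast_iff'] at hcast
    rwa [Nat.mod_eq_of_lt (by lia), Nat.mod_eq_of_lt (by lia)] at hcast

variable [Fintype V] [DecidableEq V]

lemma isHamiltonianCycle_iff_bijective (hN : 3 ≤ N) (hV : Fintype.card V = N) {v : V}
    {p : G.Walk v v} (hp : p.length = N) :
    p.IsHamiltonianCycle ↔ Function.Bijective fun i : ZMod N => p.getVert i.val := by
  rw [Walk.isHamiltonianCycle_iff_isCycle_and_length_eq, isCycle_iff_injective hN hp,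
    Fintype.bijective_iff_injective_and_card, ZMod.card, hp, hV]

/-- The cyclic enumeration of the vertices along a based Hamiltonian cycle. -/
noncomputable def hamiltonianCycleEquiv (hN : 3 ≤ N) (hV : Fintype.card V = N) :
    {p : (v : V) × G.Walk v v // p.2.IsHamiltonianCycle} ≃
      {e : ZMod N ≃ V // ∀ i, G.Adj (e i) (e (i + 1))} :=
  calc {p : (v : V) × G.Walk v v // p.2.IsHamiltonianCycle}
    _ ≃ {p : {p : (v : V) × G.Walk v v // p.2.length = N} // p.1.2.IsHamiltonianCycle} :=
        (Equiv.subtypeSubtypeEquivSubtype fun h => h.length_eq.trans hV).symm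
    _ ≃ {f : {f : ZMod N → V // ∀ i, G.Adj (f i) (f (i + 1))} // Function.Bijective f.1} :=
        (closedWalkEquiv G N).subtypeEquiv fun p => isHamiltonianCycle_iff_bijective hN hV p.2
    _ ≃ {f : {f : ZMod N → V // Function.Bijective f} // ∀ i, G.Adj (f.1 i) (f.1 (i + 1))} :=
        (Equiv.subtypeSubtypeEquivSubtypeInter _ _).trans <|
          (Equiv.subtypeEquivRight fun _ => and_comm).trans
            (Equiv.subtypeSubtypeEquivSubtypeInter _ _).symm
    _ ≃ {e : ZMod N ≃ V // ∀ i, G.Adj (e i) (e (i + 1))} :=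
        Equiv.bijectiveEquiv.subtypeEquiv fun _ => Iff.rfl

end ClosedWalks

section SigmaEquivs

variable {X ι : Type*} {α : ι → Type*}

/-- A bijection onto a disjoint union whose first component is the colouring `c` is a family of
bijections from the colour classes of `c` onto the summands. -/
def equivSigmaEquivPiFiber (c : X → ι) :
    {e : X ≃ Σ i, α i // (fun x => (e x).1) = c} ≃ ∀ i, {x // c x = i} ≃ α i where
  toFun e i := (e.1.subtypeEquiv fun x => by rw [← congrFun e.2 x]).trans (Equiv.sigmaSubtype i)
  invFun γ := ⟨(Equiv.sigmaFiberEquiv c).symm.trans (Equiv.sigmaCongrRight γ), rfl⟩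
  left_inv := by
    rintro ⟨e, rfl⟩
    rfl
  right_inv γ := by
    funext i
    ext ⟨x, rfl⟩
    rfl

variable [Fintype X] [DecidableEq ι] [∀ i, Fintype (α i)]

lemma card_fiber_fst_equiv_sigma (e : X ≃ Σ i, α i) (i : ι) :
    #{x | (e x).1 = i} = Fintype.card (α i) := by
  rw [← Fintype.card_subtype]
  exact Fintype.card_congr
    ((e.subtypeEquiv (q := fun y => y.1 = i) fun _ => Iff.rfl).trans (Equiv.sigmaSubtype i))

theorem natCard_equiv_sigma_of_fst [Fintype ι] (Q : (X → ι) → Prop) :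
    Nat.card {e : X ≃ Σ i, α i // Q fun x => (e x).1} =
      (∏ i, (Fintype.card (α i)).factorial) *
        Nat.card {c : X → ι // (∀ i, #{x | c x = i} = Fintype.card (α i)) ∧ Q c} := by
  refine natCard_subtype_eq_mul_of_fiber (fun (e : X ≃ Σ i, α i) x => (e x).1)
    (fun e => (and_iff_right (card_fiber_fst_equiv_sigma e)).symm) fun c hc => ?_
  rw [Nat.card_congr (equivSigmaEquivPiFiber c), Nat.card_pi]
  refine prod_congr rfl fun i _ => ?_
  have hcard : Nat.card {x // c x = i} = Fintype.card (α i) := by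
    rw [Nat.card_eq_fintype_card, Fintype.card_subtype, hc.1 i]
  rw [natCard_equiv_of_natCard_eq (hcard.trans Nat.card_eq_fintype_card.symm), hcard]

end SigmaEquivs

section ColorClasses

variable {X ι : Type*} [Fintype X] [DecidableEq X]

/-- The colouring by the labels of the blocks of a partition. -/
noncomputable def labelColoring (P : Finpartition (univ : Finset X)) (e : ι ≃ P.parts) (x : X) :
    ι :=
  e.symm ⟨P.part x, P.part_mem.2 (mem_univ x)⟩

lemma labelColoring_eq_iff {P : Finpartition (univ : Finset X)} {e : ι ≃ P.parts} {x : X}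
    {i : ι} : labelColoring P e x = i ↔ x ∈ (e i).1 := by
  rw [labelColoring, Equiv.symm_apply_eq, Subtype.ext_iff, P.part_eq_iff_mem (e i).2]

variable [DecidableEq ι]

lemma filter_labelColoring_eq (P : Finpartition (univ : Finset X)) (e : ι ≃ P.parts) (i : ι) :
    ({x | labelColoring P e x = i} : Finset X) = e i := by
  ext x
  simp [labelColoring_eq_iff]

variable [Fintype ι]

/-- The set of colour classes of a colouring; it contains `∅` when some colour is not used. -/
def colorClasses (c : X → ι) : Finset (Finset X) :=
  univ.image fun i => ({x | c x = i} : Finset X)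

lemma mem_colorClasses {c : X → ι} {b : Finset X} :
    b ∈ colorClasses c ↔ ∃ i, ({x | c x = i} : Finset X) = b := by
  simp [colorClasses]

lemma existsUnique_mem_colorClasses (c : X → ι) (x : X) : ∃! b, b ∈ colorClasses c ∧ x ∈ b := by
  refine ⟨({y | c y = c x} : Finset X), ⟨mem_colorClasses.2 ⟨c x, rfl⟩, by simp⟩, ?_⟩
  rintro b ⟨hb, hx⟩
  obtain ⟨i, rfl⟩ := mem_colorClasses.1 hb
  rw [(mem_filter.1 hx).2]

/-- The labelling of the colour classes by the colours, when all colours are used. -/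
noncomputable def equivColorClasses (c : X → ι) (hc : ∅ ∉ colorClasses c) :
    ι ≃ colorClasses c :=
  .ofBijective (fun i => ⟨({x | c x = i} : Finset X), mem_colorClasses.2 ⟨i, rfl⟩⟩) <| by
    refine ⟨fun i j hij => ?_, fun ⟨b, hb⟩ => ?_⟩
    · have hclass : ({x | c x = i} : Finset X) = ({x | c x = j} : Finset X) :=
        congrArg Subtype.val hij
      obtain ⟨x, hx⟩ : ({x | c x = i} : Finset X).Nonempty :=
        nonempty_iff_ne_empty.2 fun hempty => hc (mem_colorClasses.2 ⟨i, hempty⟩)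
      have hxj : x ∈ ({x | c x = j} : Finset X) := hclass ▸ hx
      exact (mem_filter.1 hx).2.symm.trans (mem_filter.1 hxj).2
    · obtain ⟨i, rfl⟩ := mem_colorClasses.1 hb
      exact ⟨i, rfl⟩

lemma colorClasses_labelColoring (P : Finpartition (univ : Finset X)) (e : ι ≃ P.parts) :
    colorClasses (labelColoring P e) = P.parts := by
  ext b
  simp only [mem_colorClasses, filter_labelColoring_eq]
  exact ⟨fun ⟨i, hi⟩ => hi ▸ (e i).2, fun hb => ⟨e.symm ⟨b, hb⟩, by simp⟩⟩

/-- Colourings whose colour classes are the blocks of `P` amount to labellings of these blocks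
by the colours. -/
noncomputable def coloringEquivLabeling (P : Finpartition (univ : Finset X)) :
    {c : X → ι // colorClasses c = P.parts} ≃ (ι ≃ P.parts) where
  toFun c := (equivColorClasses c.1 (by rw [c.2]; exact P.empty_notMem_parts)).trans
    (Equiv.subtypeEquivRight fun b => by rw [c.2])
  invFun e := ⟨labelColoring P e, colorClasses_labelColoring P e⟩
  left_inv c := by
    ext x
    exact labelColoring_eq_iff.2 (mem_filter.2 ⟨mem_univ x, rfl⟩)
  right_inv e := by
    ext1 i
    exact Subtype.ext (filter_labelColoring_eq P e i)

end ColorClasses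

section ChordDiagrams

variable {N d : ℕ}

lemma IsChordDiagram.empty_notMem {P : Finset (Finset (ZMod N))} (hP : IsChordDiagram N d P) :
    ∅ ∉ P := by
  intro hempty
  obtain ⟨b, ⟨hb, hmem⟩, -⟩ := hP.2 0
  have hcard : #b = 0 := by rw [hP.1 b hb, ← hP.1 ∅ hempty, card_empty]
  rw [card_eq_zero.1 hcard] at hmem
  exact notMem_empty _ hmem

/-- A chord diagram as a partition of the finite set of all residues. -/
def IsChordDiagram.finpartition [NeZero N] {P : Finset (Finset (ZMod N))}
    (hP : IsChordDiagram N d P) : Finpartition (univ : Finset (ZMod N)) :=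
  .ofExistsUnique P (fun _ _ => subset_univ _) (fun x _ => hP.2 x) hP.empty_notMem

lemma IsChordDiagram.card_mul [NeZero N] {P : Finset (Finset (ZMod N))}
    (hP : IsChordDiagram N d P) : #P * d = N := by
  simpa [sum_congr rfl hP.1, IsChordDiagram.finpartition] using hP.finpartition.sum_card_parts

variable {ι : Type*} [Fintype ι] [DecidableEq ι]

lemma isChordDiagram_colorClasses_iff [NeZero N] {c : ZMod N → ι} :
    IsChordDiagram N d (colorClasses c) ↔ ∀ i, #{x | c x = i} = d := by
  rw [IsChordDiagram, and_iff_left (existsUnique_mem_colorClasses c)]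
  simp [mem_colorClasses]

lemma chordLoopless_colorClasses_iff [NeZero N] {c : ZMod N → ι} :
    ChordLoopless N (colorClasses c) ↔ ∀ x, c x ≠ c (x + 1) := by
  simp [ChordLoopless, mem_colorClasses, eq_comm]

theorem natCard_coloring_eq_factorial_mul_numB [NeZero (Fintype.card ι * d)] :
    Nat.card {c : ZMod (Fintype.card ι * d) → ι //
        (∀ i, #{x | c x = i} = d) ∧ ∀ x, c x ≠ c (x + 1)} =
      (Fintype.card ι).factorial * numB d (Fintype.card ι) := by
  rw [numB, ← Nat.card_coe_set_eq]
  refine natCard_subtype_eq_mul_of_fiber colorClasses (fun c => by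
    rw [Set.mem_ofPred_eq, isChordDiagram_colorClasses_iff, chordLoopless_colorClasses_iff]) ?_
  rintro P ⟨hP, -⟩
  have hd : 0 < d := Nat.pos_of_ne_zero (right_ne_zero_of_mul (NeZero.ne (Fintype.card ι * d)))
  have hcard : Nat.card ι = Nat.card P := by
    simpa using (Nat.eq_of_mul_eq_mul_right hd hP.card_mul).symm
  calc Nat.card {c // colorClasses c = P}
    _ = Nat.card (ι ≃ P) := Nat.card_congr (coloringEquivLabeling hP.finpartition)
    _ = (Fintype.card ι).factorial := by
      rw [natCard_equiv_of_natCard_eq hcard, Nat.card_eq_fintype_card]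

end ChordDiagrams

theorem hamiltonianCycle_count_general {ι : Type*} {α : ι → Type*} [Fintype ι] [DecidableEq ι]
    [∀ i, Fintype (α i)] [∀ i, DecidableEq (α i)] {d : ℕ} (hα : ∀ i, Fintype.card (α i) = d)
    (hN : 3 ≤ Fintype.card ι * d) :
    Nat.card {p : (v : Σ i, α i) × (completeMultipartiteGraph α).Walk v v //
        p.2.IsHamiltonianCycle} =
      (Fintype.card ι).factorial * d.factorial ^ Fintype.card ι * numB d (Fintype.card ι) := by
  have : NeZero (Fintype.card ι * d) := ⟨by lia⟩
  have hV : Fintype.card (Σ i, α i) = Fintype.card ι * d := by simp [hα]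
  calc
    _ = Nat.card {e : ZMod (Fintype.card ι * d) ≃ Σ i, α i // ∀ x, (e x).1 ≠ (e (x + 1)).1} :=
      Nat.card_congr (hamiltonianCycleEquiv hN hV)
    _ = (∏ i, (Fintype.card (α i)).factorial) *
          Nat.card {c : ZMod (Fintype.card ι * d) → ι //
            (∀ i, #{x | c x = i} = Fintype.card (α i)) ∧ ∀ x, c x ≠ c (x + 1)} :=
      natCard_equiv_sigma_of_fst fun c => ∀ x, c x ≠ c (x + 1)
    _ = d.factorial ^ Fintype.card ι * ((Fintype.card ι).factorial * numB d (Fintype.card ι)) := by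
      simp only [hα, prod_const, card_univ, natCard_coloring_eq_factorial_mul_numB]
    _ = _ := by ring

/-- the number of pairs (vertex, Hamiltonian cycle based at it) in the
complete `n`-partite graph with parts of size `d` equals `n! · (d!)^n · b(n)`. -/
theorem hamiltonianCycle_count (d n : ℕ) (hd : 2 ≤ d) (hn : 2 ≤ n) :
    Nat.card {p : (v : Σ _ : Fin n, Fin d) ×
        (SimpleGraph.completeMultipartiteGraph (fun _ : Fin n => Fin d)).Walk v v //
          p.2.IsHamiltonianCycle} =
      n.factorial * d.factorial ^ n * numB d n := by
  have hN : 4 ≤ n * d := Nat.mul_le_mul hn hd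
  simpa using hamiltonianCycle_count_general (α := fun _ : Fin n => Fin d)
    (fun _ => Fintype.card_fin d) (by rw [Fintype.card_fin]; lia)
end

section
/- Let d = 2. For every integer n ≥ 2, the number of loopless chord diagrams satisfies b(n) = a(n,0) − a(n−1,0). -/
/-!
A loopless diagram with blocks of size two is a perfect matching: loopless linear diagrams are the
perfect matchings of the complement of the path `1 - 2 - ⋯ - N`, loopless chord diagrams those of
the complement of the cycle obtained by adding the edge `{1, N}`, where `N = 2 * n`. The number
`m(G)` of perfect matchings of a graph satisfies `m(G) = m(G - e) + m(G - {x, y})` for every edge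
`e = {x, y}`, according to whether `e` is used. For the complement of the path and `e = {1, N}` the
two summands are `b(n)` and the number of loopless linear diagrams on `2, …, N - 1`.
-/

section ExactCover

variable {α : Type*} {F : Set (Finset α)} {S e : Finset α} {P : Finset (Finset α)}

/-- `P` is an exact cover of `S` by members of the family `F`: its blocks are subsets of `S` that
belong to `F`, and every point of `S` lies in exactly one of them. Perfect matchings of a graph are
the exact covers of its vertex set by edges. -/
def IsExactCover (F : Set (Finset α)) (S : Finset α) (P : Finset (Finset α)) : Prop :=
  (∀ b ∈ P, b ∈ F) ∧ (∀ b ∈ P, b ⊆ S) ∧ ∀ x ∈ S, ∃! b, b ∈ P ∧ x ∈ b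

/-- The number of exact covers of `S` by members of `F`. -/
noncomputable def numExactCovers (F : Set (Finset α)) (S : Finset α) : ℕ :=
  {P | IsExactCover F S P}.ncard

theorem IsExactCover.mem_powerset_powerset (hP : IsExactCover F S P) : P ∈ S.powerset.powerset :=
  Finset.mem_powerset.2 fun b hb ↦ Finset.mem_powerset.2 (hP.2.1 b hb)

theorem finite_setOf_isExactCover (F : Set (Finset α)) (S : Finset α) :
    {P | IsExactCover F S P}.Finite :=
  S.powerset.powerset.finite_toSet.subset fun _ hP ↦ hP.mem_powerset_powerset

theorem isExactCover_sdiff_singleton_iff :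
    IsExactCover (F \ {e}) S P ↔ IsExactCover F S P ∧ e ∉ P := by
  have hblocks : (∀ b ∈ P, b ∈ F \ {e}) ↔ (∀ b ∈ P, b ∈ F) ∧ e ∉ P := by
    simp only [Set.mem_sdiff, Set.mem_singleton_iff, forall₂_and]
    exact and_congr_right fun _ ↦ ⟨fun h he ↦ h e he rfl, fun h b hb hbe ↦ h (hbe ▸ hb)⟩
  rw [IsExactCover, IsExactCover, hblocks]
  tauto

section Image

variable {β : Type*} [DecidableEq β] {G : Set (Finset β)} {f : α → β}

theorem existsUnique_mem_image_and_iff (hf : Set.InjOn f S) {p : β → Prop} :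
    (∃! y, y ∈ S.image f ∧ p y) ↔ ∃! x, x ∈ S ∧ p (f x) := by
  constructor
  · rintro ⟨_, ⟨hy, hpy⟩, hu⟩
    obtain ⟨x, hx, rfl⟩ := Finset.mem_image.1 hy
    exact ⟨x, ⟨hx, hpy⟩, fun z ⟨hz, hpz⟩ ↦ hf hz hx (hu _ ⟨Finset.mem_image_of_mem f hz, hpz⟩)⟩
  · rintro ⟨x, ⟨hx, hpx⟩, hu⟩
    refine ⟨f x, ⟨Finset.mem_image_of_mem f hx, hpx⟩, fun y ⟨hy, hpy⟩ ↦ ?_⟩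
    obtain ⟨z, hz, rfl⟩ := Finset.mem_image.1 hy
    rw [hu z ⟨hz, hpy⟩]

theorem isExactCover_image_iff (hf : Set.InjOn f S)
    (hFG : ∀ b ⊆ S, b.image f ∈ G ↔ b ∈ F) (hP : P ∈ S.powerset.powerset) :
    IsExactCover G (S.image f) (P.image (Finset.image f)) ↔ IsExactCover F S P := by
  have hPS : ∀ b ∈ P, b ⊆ S := fun b hb ↦ Finset.mem_powerset.1 (Finset.mem_powerset.1 hP hb)
  have hmem : ∀ x ∈ S, ∀ b ∈ P, f x ∈ b.image f ↔ x ∈ b := fun x hx b hb ↦ by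
    exact_mod_cast hf.mem_image_iff (Finset.coe_subset.2 (hPS b hb)) hx
  have hblocks : (∀ c ∈ P.image (Finset.image f), c ∈ G) ↔ ∀ b ∈ P, b ∈ F := by
    rw [Finset.forall_mem_image]
    exact forall₂_congr fun b hb ↦ hFG b (hPS b hb)
  have hsub : (∀ c ∈ P.image (Finset.image f), c ⊆ S.image f) ↔ ∀ b ∈ P, b ⊆ S := by
    rw [Finset.forall_mem_image]
    exact forall₂_congr fun b hb ↦
      iff_of_true (Finset.image_subset_image (hPS b hb)) (hPS b hb)
  have hunique : ∀ x ∈ S, (∃! c, c ∈ P.image (Finset.image f) ∧ f x ∈ c) ↔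
      ∃! b, b ∈ P ∧ x ∈ b := fun x hx ↦ by
    rw [existsUnique_mem_image_and_iff
      ((Finset.image_injOn_powerset_of_injOn hf).mono (Finset.mem_powerset.1 hP))]
    exact existsUnique_congr fun b ↦ and_congr_right fun hb ↦ hmem x hx b hb
  rw [IsExactCover, IsExactCover, hblocks, hsub, Finset.forall_mem_image]
  exact and_congr_right' (and_congr_right' (forall₂_congr hunique))

theorem numExactCovers_image (hf : Set.InjOn f S) (hFG : ∀ b ⊆ S, b.image f ∈ G ↔ b ∈ F) :
    numExactCovers G (S.image f) = numExactCovers F S := by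
  have himage : {Q | IsExactCover G (S.image f) Q} =
      Finset.image (Finset.image f) '' {P | IsExactCover F S P} := by
    ext Q
    constructor
    · intro hQ
      have hQmem := hQ.mem_powerset_powerset
      rw [Finset.powerset_image, Finset.powerset_image] at hQmem
      obtain ⟨P, hP, rfl⟩ := Finset.mem_image.1 hQmem
      exact ⟨P, (isExactCover_image_iff hf hFG hP).1 hQ, rfl⟩
    · rintro ⟨P, hP, rfl⟩
      exact (isExactCover_image_iff hf hFG hP.mem_powerset_powerset).2 hP
  rw [numExactCovers, himage]
  have hinj := Finset.image_injOn_powerset_of_injOn (Finset.image_injOn_powerset_of_injOn hf)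
  exact (hinj.mono fun _ hP ↦ IsExactCover.mem_powerset_powerset hP).ncard_image

end Image

section Recurrence

variable [DecidableEq α]

theorem IsExactCover.notMem_of_sdiff (he : e.Nonempty) (hP : IsExactCover F (S \ e) P) :
    e ∉ P := fun heP ↦ by
  obtain ⟨x, hx⟩ := he
  exact (Finset.mem_sdiff.1 (hP.2.1 e heP hx)).2 hx

theorem IsExactCover.insert (heF : e ∈ F) (heS : e ⊆ S) (hP : IsExactCover F (S \ e) P) :
    IsExactCover F S (insert e P) := by
  obtain ⟨hF, hS, hu⟩ := hP
  refine ⟨(Finset.forall_mem_insert _ _ _).2 ⟨heF, hF⟩, (Finset.forall_mem_insert _ _ _).2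
    ⟨heS, fun b hb ↦ (hS b hb).trans Finset.sdiff_subset⟩, fun x hx ↦ ?_⟩
  by_cases hxe : x ∈ e
  · refine ⟨e, ⟨Finset.mem_insert_self _ _, hxe⟩, fun b ⟨hb, hxb⟩ ↦ ?_⟩
    exact (Finset.mem_insert.1 hb).resolve_right fun hbP ↦
      (Finset.mem_sdiff.1 (hS b hbP hxb)).2 hxe
  · obtain ⟨b, ⟨hb, hxb⟩, hbu⟩ := hu x (Finset.mem_sdiff.2 ⟨hx, hxe⟩)
    refine ⟨b, ⟨Finset.mem_insert_of_mem hb, hxb⟩, fun c ⟨hc, hxc⟩ ↦ hbu c ⟨?_, hxc⟩⟩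
    exact (Finset.mem_insert.1 hc).resolve_left fun hce ↦ hxe (hce ▸ hxc)

theorem IsExactCover.erase (he : e ∈ P) (hP : IsExactCover F S P) :
    IsExactCover F (S \ e) (P.erase e) := by
  obtain ⟨hF, hS, hu⟩ := hP
  refine ⟨fun b hb ↦ hF b (Finset.mem_of_mem_erase hb), fun b hb x hxb ↦ ?_, fun x hx ↦ ?_⟩
  · obtain ⟨hbe, hbP⟩ := Finset.mem_erase.1 hb
    have hxS := hS b hbP hxb
    exact Finset.mem_sdiff.2 ⟨hxS, fun hxe ↦ hbe ((hu x hxS).unique ⟨hbP, hxb⟩ ⟨he, hxe⟩)⟩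
  · obtain ⟨hxS, hxe⟩ := Finset.mem_sdiff.1 hx
    obtain ⟨b, ⟨hb, hxb⟩, hbu⟩ := hu x hxS
    have hbe : b ≠ e := fun h ↦ hxe (h ▸ hxb)
    exact ⟨b, ⟨Finset.mem_erase.2 ⟨hbe, hb⟩, hxb⟩, fun c ⟨hc, hxc⟩ ↦
      hbu c ⟨Finset.mem_of_mem_erase hc, hxc⟩⟩

theorem bijOn_insert_isExactCover (he : e.Nonempty) (heF : e ∈ F) (heS : e ⊆ S) :
    Set.BijOn (insert e) {P | IsExactCover F (S \ e) P} {P | IsExactCover F S P ∧ e ∈ P} := by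
  refine Set.InvOn.bijOn (f' := (Finset.erase · e)) ⟨?_, ?_⟩ ?_ ?_
  · exact fun P hP ↦ Finset.erase_insert (IsExactCover.notMem_of_sdiff he hP)
  · exact fun P hP ↦ Finset.insert_erase hP.2
  · exact fun P hP ↦ ⟨IsExactCover.insert heF heS hP, Finset.mem_insert_self _ _⟩
  · exact fun P hP ↦ hP.1.erase hP.2

theorem numExactCovers_eq_sdiff_singleton_add_sdiff (he : e.Nonempty) (heF : e ∈ F) (heS : e ⊆ S) :
    numExactCovers F S = numExactCovers (F \ {e}) S + numExactCovers F (S \ e) := by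
  have hwithout : numExactCovers (F \ {e}) S = ({P | IsExactCover F S P} \ {P | e ∈ P}).ncard :=
    congrArg Set.ncard (Set.ext fun _ ↦ isExactCover_sdiff_singleton_iff)
  have hwith : numExactCovers F (S \ e) = ({P | IsExactCover F S P} ∩ {P | e ∈ P}).ncard :=
    (bijOn_insert_isExactCover he heF heS).ncard_eq
  rw [hwithout, hwith, add_comm]
  exact (Set.ncard_inter_add_ncard_sdiff_eq_ncard _ _ (finite_setOf_isExactCover F S)).symm

end Recurrence

end ExactCover

section Loopless

/-- The possible blocks of a loopless diagram with blocks of size `d`: the `d`-element sets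
containing no `i` together with `i + 1`. On `ZMod N` the successor is cyclic, on `ℕ` it is not. -/
def looplessBlocks (α : Type*) [Add α] [One α] (d : ℕ) : Set (Finset α) :=
  {b | b.card = d ∧ ∀ i ∈ b, i + 1 ∉ b}

theorem linLoops_eq_zero_iff {N : ℕ} {P : Finset (Finset ℕ)}
    (hP : ∀ b ∈ P, b ⊆ Finset.Icc 1 N) :
    linLoops N P = 0 ↔ ∀ b ∈ P, ∀ i ∈ b, i + 1 ∉ b := by
  have hfin : {i : ℕ | 1 ≤ i ∧ i + 1 ≤ N ∧ ∃ b ∈ P, i ∈ b ∧ i + 1 ∈ b}.Finite :=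
    (Set.finite_Iio N).subset fun i hi ↦ hi.2.1
  rw [linLoops, Set.ncard_eq_zero hfin, Set.eq_empty_iff_forall_notMem]
  refine ⟨fun h b hb i hi hi' ↦ h i ⟨?_, ?_, b, hb, hi, hi'⟩,
    fun h i ⟨_, _, b, hb, hi, hi'⟩ ↦ h b hb i hi hi'⟩
  · exact (Finset.mem_Icc.1 (hP b hb hi)).1
  · exact (Finset.mem_Icc.1 (hP b hb hi')).2

theorem numA_zero_eq_numExactCovers (d n : ℕ) :
    numA d n 0 = numExactCovers (looplessBlocks ℕ d) (Finset.Icc 1 (n * d)) := by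
  refine congrArg Set.ncard (Set.ext fun P ↦ ?_)
  constructor
  · rintro ⟨⟨hcard, hsub, hu⟩, hloops⟩
    rw [linLoops_eq_zero_iff hsub] at hloops
    exact ⟨fun b hb ↦ ⟨hcard b hb, hloops b hb⟩, hsub, hu⟩
  · rintro ⟨hF, hsub, hu⟩
    exact ⟨⟨fun b hb ↦ (hF b hb).1, hsub, hu⟩,
      (linLoops_eq_zero_iff hsub).2 fun b hb ↦ (hF b hb).2⟩

theorem numB_eq_numExactCovers (d n : ℕ) [NeZero (n * d)] :
    numB d n = numExactCovers (looplessBlocks (ZMod (n * d)) d) Finset.univ := by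
  refine congrArg Set.ncard (Set.ext fun P ↦ ?_)
  constructor
  · rintro ⟨⟨hcard, hu⟩, hloops⟩
    exact ⟨fun b hb ↦ ⟨hcard b hb, fun i ↦ hloops i b hb⟩, fun b _ ↦ b.subset_univ,
      fun x _ ↦ hu x⟩
  · rintro ⟨hF, -, hu⟩
    exact ⟨⟨fun b hb ↦ (hF b hb).1, fun x ↦ hu x (Finset.mem_univ x)⟩,
      fun i b hb ↦ (hF b hb).2 i⟩

theorem image_add_right_mem_looplessBlocks_iff {α : Type*} [AddCommSemigroup α]
    [IsRightCancelAdd α] [One α] [DecidableEq α] {d : ℕ} {b : Finset α} (c : α) :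
    b.image (· + c) ∈ looplessBlocks α d ↔ b ∈ looplessBlocks α d := by
  simp [looplessBlocks, Finset.card_image_of_injective _ (add_left_injective c),
    add_right_comm _ c 1]

theorem numExactCovers_looplessBlocks_image_add_right {α : Type*} [AddCommSemigroup α]
    [IsRightCancelAdd α] [One α] [DecidableEq α] (d : ℕ) (S : Finset α) (c : α) :
    numExactCovers (looplessBlocks α d) (S.image (· + c)) =
      numExactCovers (looplessBlocks α d) S :=
  numExactCovers_image (add_left_injective c).injOn fun _ _ ↦
    image_add_right_mem_looplessBlocks_iff c

theorem injOn_natCast_zmod_Icc (N : ℕ) :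
    Set.InjOn (Nat.cast : ℕ → ZMod N) (Finset.Icc 1 N : Finset ℕ) := by
  intro i hi j hj hij
  have hIco : Finset.Icc 1 N = Finset.Ico 1 (1 + N) := by rw [add_comm]; rfl
  rw [hIco] at hi hj
  exact Nat.mod_injOn_Ico 1 N hi hj ((ZMod.natCast_eq_natCast_iff' i j N).1 hij)

theorem image_natCast_zmod_Icc (N : ℕ) [NeZero N] :
    (Finset.Icc 1 N).image (Nat.cast : ℕ → ZMod N) = Finset.univ := by
  rw [← Finset.card_eq_iff_eq_univ, Finset.card_image_of_injOn (injOn_natCast_zmod_Icc N),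
    Nat.card_Icc, ZMod.card, Nat.add_sub_cancel]

theorem natCast_zmod_eq_natCast_add_one_iff {N i j : ℕ} (hi : i ∈ Finset.Icc 1 N)
    (hj : j ∈ Finset.Icc 1 N) :
    (j : ZMod N) = i + 1 ↔ j = i + 1 ∨ i = N ∧ j = 1 := by
  have hiN := Finset.mem_Icc.1 hi
  have hjN := Finset.mem_Icc.1 hj
  rcases hiN.2.eq_or_lt with rfl | hlt
  · have hone : 1 ∈ Finset.Icc 1 i := Finset.mem_Icc.2 ⟨le_rfl, hiN.1⟩
    have hcast := (injOn_natCast_zmod_Icc i).eq_iff hj hone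
    rw [ZMod.natCast_self, zero_add, ← Nat.cast_one, hcast]
    omega
  · have hsucc : i + 1 ∈ Finset.Icc 1 N := Finset.mem_Icc.2 ⟨by omega, hlt⟩
    rw [← Nat.cast_succ, (injOn_natCast_zmod_Icc N).eq_iff hj hsucc]
    omega

theorem image_natCast_zmod_mem_looplessBlocks_iff {N d : ℕ} {b : Finset ℕ}
    (hb : b ⊆ Finset.Icc 1 N) :
    b.image (Nat.cast : ℕ → ZMod N) ∈ looplessBlocks (ZMod N) d ↔
      b ∈ looplessBlocks ℕ d ∧ ¬(1 ∈ b ∧ N ∈ b) := by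
  have hcard : (b.image (Nat.cast : ℕ → ZMod N)).card = b.card :=
    Finset.card_image_of_injOn ((injOn_natCast_zmod_Icc N).mono (Finset.coe_subset.2 hb))
  have hloop : ∀ i ∈ b, ((i : ZMod N) + 1 ∈ b.image (Nat.cast : ℕ → ZMod N) ↔
      i + 1 ∈ b ∨ i = N ∧ 1 ∈ b) := fun i hi ↦ by
    calc (i : ZMod N) + 1 ∈ b.image (Nat.cast : ℕ → ZMod N)
        ↔ ∃ j ∈ b, j = i + 1 ∨ i = N ∧ j = 1 := by
          rw [Finset.mem_image]
          exact exists_congr fun j ↦ and_congr_right fun hj ↦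
            natCast_zmod_eq_natCast_add_one_iff (hb hi) (hb hj)
      _ ↔ i + 1 ∈ b ∨ i = N ∧ 1 ∈ b := by grind
  simp only [looplessBlocks, Set.mem_ofPred_eq, hcard, Finset.forall_mem_image]
  rw [forall₂_congr fun i hi ↦ not_congr (hloop i hi)]
  grind

theorem numExactCovers_looplessBlocks_zmod (N d : ℕ) [NeZero N] :
    numExactCovers (looplessBlocks (ZMod N) d) Finset.univ =
      numExactCovers {b ∈ looplessBlocks ℕ d | ¬(1 ∈ b ∧ N ∈ b)} (Finset.Icc 1 N) := by
  rw [← image_natCast_zmod_Icc]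
  exact numExactCovers_image (injOn_natCast_zmod_Icc N) fun _ hb ↦
    image_natCast_zmod_mem_looplessBlocks_iff hb

theorem pair_mem_looplessBlocks_iff {i j : ℕ} (hij : i < j) :
    {i, j} ∈ looplessBlocks ℕ 2 ↔ i + 1 ≠ j := by
  refine ⟨fun h hsucc ↦ h.2 i (by simp) (by simp [hsucc]),
    fun h ↦ ⟨Finset.card_pair hij.ne, fun k hk hk' ↦ ?_⟩⟩
  rw [Finset.mem_insert, Finset.mem_singleton] at hk hk'
  omega

theorem looplessBlocks_two_sdiff_pair {α : Type*} [Add α] [One α] [DecidableEq α] {i j : α}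
    (hij : i ≠ j) :
    looplessBlocks α 2 \ {{i, j}} = {b ∈ looplessBlocks α 2 | ¬(i ∈ b ∧ j ∈ b)} := by
  ext b
  refine and_congr_right fun ⟨hcard, _⟩ ↦ not_congr ?_
  have hsub : {i, j} ⊆ b ↔ i ∈ b ∧ j ∈ b := by
    rw [Finset.insert_subset_iff, Finset.singleton_subset_iff]
  rw [Set.mem_singleton_iff, ← hsub]
  refine ⟨fun h ↦ h.ge, fun h ↦ (Finset.eq_of_subset_of_card_le h ?_).symm⟩
  rw [hcard, Finset.card_pair hij]

end Loopless

/-- for `d = 2` and `n ≥ 2`, `b(n) = a(n,0) − a(n−1,0)`. -/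
theorem chord_eq_linear_sub_two (n : ℕ) (hn : 2 ≤ n) :
    (numB 2 n : ℤ) = (numA 2 n 0 : ℤ) - (numA 2 (n - 1) 0 : ℤ) := by
  have : NeZero (n * 2) := ⟨by omega⟩
  have hpair : {1, n * 2} ∈ looplessBlocks ℕ 2 :=
    (pair_mem_looplessBlocks_iff (by omega)).2 (by omega)
  have hsub : {1, n * 2} ⊆ Finset.Icc 1 (n * 2) := by grind
  have hinterior : Finset.Icc 1 (n * 2) \ {1, n * 2} =
      (Finset.Icc 1 ((n - 1) * 2)).image (· + 1) := by
    rw [Finset.image_add_right_Icc]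
    grind
  have hchord : numB 2 n =
      numExactCovers (looplessBlocks ℕ 2 \ {{1, n * 2}}) (Finset.Icc 1 (n * 2)) := by
    rw [numB_eq_numExactCovers, numExactCovers_looplessBlocks_zmod,
      looplessBlocks_two_sdiff_pair (by omega)]
  have hrec := numExactCovers_eq_sdiff_singleton_add_sdiff (Finset.insert_nonempty _ _) hpair hsub
  rw [hinterior, numExactCovers_looplessBlocks_image_add_right, ← hchord,
    ← numA_zero_eq_numExactCovers, ← numA_zero_eq_numExactCovers] at hrec
  omega
end
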